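/- arXiv:1308.3090 — 4 statements merged into one kernel-verified Lean document; each statement's English description precedes it below -/
import Mathlib

section
/- Let X₁, X₂, … be i.i.d. real random variables with E[X₁²] < ∞, S_n := X₁+…+X_n, S̄_n := max_{1≤k≤n} S_k, and let x⁺ := max(x,0). Then for every n ≥ 1, E[(S̄_n⁺)²] = Σ_{k≥1, l≥1, k+l≤n} (1/(k·l))·E[S_k⁺]·E[S_l⁺] + Σ_{k=1}^{n} (1/k)·E[(S_k⁺)²]. -/
open MeasureTheory ProbabilityTheory Filter
open scoped ENNReal

/-!
On an ordered group the map `x ↦ x⁺` satisfies the Rota–Baxter identity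
`f (x⁺ + y⁺) + f (x + y)⁺ = f (x + y⁺)⁺ + f (x⁺ + y)⁺`. Writing `Lₙ` for the law of
`max (0, S₁, …, Sₙ)`, which obeys Lindley's recursion `Lₙ₊₁ = law of (X + Lₙ)⁺`, the identity
telescopes to Spitzer's formula, differentiated in the generating variable so that no exponential
is needed:
`(n + 1) Lₙ₊₁ = ∑_{i + j = n} law(Sᵢ₊₁⁺) ∗ Lⱼ`.
Let `M₁`, `M₂` be the generating functions of the first two moments of `Lₙ`, let
`A = ∑ E[S_k⁺] tᵏ / k` and `B = ∑ E[(S_k⁺)²] tᵏ / k`, and put `g = 1 / (1 - t)`. Integrating `x` and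
`x²` against Spitzer's formula gives `M₁' = g (A' + M₁)` and `M₂' = g (B' + M₂) + 2 A' M₁`, whence
`M₁ = g A` and `M₂ = g (A² + B)`; the theorem compares coefficients of `tⁿ` in the latter.
-/

namespace Spitzer

open Finset

section Convolution

variable {G : Type*} [AddCommMonoid G] [MeasurableSpace G] [MeasurableAdd₂ G]

/-- The `n`-th convolution power of `μ`: the law of `X₁ + ⋯ + Xₙ` for i.i.d. `Xᵢ` of law `μ`. -/
noncomputable def convPow (μ : Measure G) : ℕ → Measure G
  | 0 => Measure.dirac 0
  | n + 1 => μ ∗ convPow μ n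

instance isFiniteMeasure_convPow (μ : Measure G) [IsFiniteMeasure μ] (n : ℕ) :
    IsFiniteMeasure (convPow μ n) := by
  induction n with
  | zero => rw [convPow]; infer_instance
  | succ n ih => rw [convPow]; infer_instance

instance isProbabilityMeasure_convPow (μ : Measure G) [IsProbabilityMeasure μ] (n : ℕ) :
    IsProbabilityMeasure (convPow μ n) := by
  induction n with
  | zero => rw [convPow]; infer_instance
  | succ n ih => rw [convPow]; infer_instance

theorem conv_finsetSum {ι : Type*} (μ : Measure G) [SFinite μ] (s : Finset ι) (ν : ι → Measure G)
    [∀ i, IsFiniteMeasure (ν i)] : μ ∗ ∑ i ∈ s, ν i = ∑ i ∈ s, μ ∗ ν i := by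
  classical
  induction s using Finset.induction_on with
  | empty => simp
  | insert i s hi ih => rw [sum_insert hi, sum_insert hi, Measure.conv_add, ih]

theorem map_conv_map {α β : Type*} [MeasurableSpace α] [MeasurableSpace β] (μ : Measure α)
    (ν : Measure β) [SFinite μ] [SFinite ν] {f : α → G} {g : β → G} (hf : Measurable f)
    (hg : Measurable g) :
    μ.map f ∗ ν.map g = (μ.prod ν).map (fun p ↦ f p.1 + g p.2) := by
  rw [Measure.conv, Measure.map_prod_map _ _ hf hg,
    Measure.map_map measurable_add (hf.prodMap hg)]
  rfl

theorem hasLaw_sum_range {Ω : Type*} [MeasurableSpace Ω] {P : Measure Ω} {μ : Measure G}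
    [IsProbabilityMeasure μ] {X : ℕ → Ω → G} (hindep : iIndepFun X P)
    (hX : ∀ i, HasLaw (X i) μ P) (n : ℕ) : HasLaw (∑ i ∈ range n, X i) (convPow μ n) P := by
  have := (hX 0).isProbabilityMeasure
  induction n with
  | zero => exact hasLaw_dirac_of_ae_eq (ae_of_all P fun _ ↦ rfl)
  | succ n ih =>
    rw [sum_range_succ_comm]
    exact (hindep.indepFun_sum_range_succ₀ (fun i ↦ (hX i).aemeasurable) n).symm.hasLaw_add
      (hX n) ih

end Convolution

section SpitzerIdentity

variable {G : Type*} [AddCommGroup G] [LinearOrder G]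

theorem apply_posPart_rotaBaxter [IsOrderedAddMonoid G] {M : Type*} [AddCommMonoid M]
    (f : G → M) (x y : G) :
    f (x⁺ + y⁺) + f (x + y)⁺ = f (x + y⁺)⁺ + f (x⁺ + y)⁺ := by
  rcases le_total x 0 with hx | hx <;> rcases le_total y 0 with hy | hy
  · simp [hx, hy, add_nonpos hx hy]
  · simp [hx, hy, add_comm]
  · simp [hx, hy]
  · simp [hx, hy, add_nonneg hx hy]

variable [MeasurableSpace G] [MeasurableAdd₂ G] [MeasurableSup G]

instance isProbabilityMeasure_map_posPart (μ : Measure G) [IsProbabilityMeasure μ] :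
    IsProbabilityMeasure (μ.map posPart) :=
  Measure.isProbabilityMeasure_map measurable_posPart.aemeasurable

/-- The law of `max (0, S₁, …, Sₙ)` for a random walk `S` with step law `μ`, encoded by Lindley's
recursion `Wₙ₊₁ = (X + Wₙ)⁺`, which never mentions the walk itself. -/
noncomputable def lindley (μ : Measure G) : ℕ → Measure G
  | 0 => Measure.dirac 0
  | n + 1 => (μ ∗ lindley μ n).map posPart

instance isFiniteMeasure_lindley (μ : Measure G) [IsFiniteMeasure μ] (n : ℕ) :
    IsFiniteMeasure (lindley μ n) := by
  induction n with
  | zero => rw [lindley]; infer_instance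
  | succ n ih => rw [lindley]; infer_instance

instance isProbabilityMeasure_lindley (μ : Measure G) [IsProbabilityMeasure μ] (n : ℕ) :
    IsProbabilityMeasure (lindley μ n) := by
  induction n with
  | zero => rw [lindley]; infer_instance
  | succ n ih => rw [lindley]; infer_instance

variable [IsOrderedAddMonoid G]

theorem map_posPart_rotaBaxter (μ ν : Measure G) [SFinite μ] [SFinite ν] :
    μ.map posPart ∗ ν.map posPart + (μ ∗ ν).map posPart =
      (μ ∗ ν.map posPart).map posPart + (μ.map posPart ∗ ν).map posPart := by
  have hpos : Measurable (posPart : G → G) := measurable_posPart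
  have conv₁ := map_conv_map μ ν hpos hpos
  have conv₂ := map_conv_map μ ν measurable_id measurable_id
  have conv₃ := map_conv_map μ ν measurable_id hpos
  have conv₄ := map_conv_map μ ν hpos measurable_id
  simp only [Measure.map_id, id_eq] at conv₂ conv₃ conv₄
  refine Measure.ext_of_lintegral _ fun f hf ↦ ?_
  have hf' : Measurable fun x ↦ f x⁺ := hf.comp hpos
  simp only [conv₁, conv₂, conv₃, conv₄, lintegral_add_measure, lintegral_map hf hpos]
  rw [lintegral_map hf (by fun_prop), lintegral_map hf' (by fun_prop),
    lintegral_map hf' (by fun_prop), lintegral_map hf' (by fun_prop),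
    ← lintegral_add_left (by fun_prop), ← lintegral_add_left (by fun_prop)]
  exact lintegral_congr fun p ↦ apply_posPart_rotaBaxter f p.1 p.2

theorem map_posPart_convPow_conv_lindley_succ (μ : Measure G) [IsFiniteMeasure μ] (i j : ℕ) :
    (convPow μ (i + 1)).map posPart ∗ lindley μ (j + 1) +
        (convPow μ (i + 2) ∗ lindley μ j).map posPart =
      (convPow μ (i + 1) ∗ lindley μ (j + 1)).map posPart +
        (μ ∗ (convPow μ (i + 1)).map posPart ∗ lindley μ j).map posPart := by
  have key := map_posPart_rotaBaxter (convPow μ (i + 1)) (μ ∗ lindley μ j)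
  rwa [← Measure.conv_assoc, ← Measure.conv_assoc, Measure.conv_comm _ μ,
    Measure.conv_comm _ μ, Measure.conv_assoc μ (Measure.map _ _)] at key

theorem sum_conv_lindley_succ (μ : Measure G) [IsFiniteMeasure μ] (n : ℕ) :
    ∑ p ∈ antidiagonal (n + 1), (convPow μ (p.1 + 1)).map posPart ∗ lindley μ p.2 =
      lindley μ (n + 2) + (μ ∗ ∑ p ∈ antidiagonal n,
        (convPow μ (p.1 + 1)).map posPart ∗ lindley μ p.2).map posPart := by
  set mixed : ℕ × ℕ → Measure G := fun p ↦ (convPow μ (p.1 + 1) ∗ lindley μ p.2).map posPart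
  have mixed_zero (j : ℕ) : mixed (0, j) = lindley μ (j + 1) := by
    simp [mixed, convPow, lindley, Measure.conv_dirac_zero]
  have mixed_zero' (i : ℕ) :
      (convPow μ (i + 1)).map posPart ∗ lindley μ 0 = mixed (i, 0) := by
    simp [mixed, lindley, Measure.conv_dirac_zero]
  have rotaBaxter := sum_congr (rfl : antidiagonal n = _) fun p _ ↦
    map_posPart_convPow_conv_lindley_succ μ p.1 p.2
  rw [sum_add_distrib, sum_add_distrib] at rotaBaxter
  have split : ∑ p ∈ antidiagonal n, mixed (p.1, p.2 + 1) + mixed (n + 1, 0) =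
      lindley μ (n + 2) + ∑ p ∈ antidiagonal n, mixed (p.1 + 1, p.2) := by
    rw [← mixed_zero, add_comm, ← Nat.sum_antidiagonal_succ', Nat.sum_antidiagonal_succ]
  rw [conv_finsetSum, Measure.map_finset_sum measurable_posPart.aemeasurable]
  refine (Measure.add_left_inj (∑ p ∈ antidiagonal n, mixed (p.1 + 1, p.2)) _ _).1 ?_
  calc
    _ = mixed (n + 1, 0) + (∑ p ∈ antidiagonal n, mixed (p.1, p.2 + 1) +
          ∑ p ∈ antidiagonal n,
            (μ ∗ (convPow μ (p.1 + 1)).map posPart ∗ lindley μ p.2).map posPart) := by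
      rw [← rotaBaxter, Nat.sum_antidiagonal_succ', mixed_zero', add_assoc]
    _ = _ := by
      rw [← add_assoc, add_comm (mixed _), split]
      abel

theorem spitzer_identity (μ : Measure G) [IsFiniteMeasure μ] (n : ℕ) :
    (n + 1) • lindley μ (n + 1) =
      ∑ p ∈ antidiagonal n, (convPow μ (p.1 + 1)).map posPart ∗ lindley μ p.2 := by
  induction n with
  | zero => simp [convPow, lindley, Measure.conv_dirac_zero]
  | succ n ih =>
    have map_nsmul (k : ℕ) :
        (μ ∗ (k • lindley μ (n + 1))).map posPart = k • lindley μ (n + 2) := by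
      rw [← card_range k, ← sum_const, conv_finsetSum,
        Measure.map_finset_sum measurable_posPart.aemeasurable, sum_const]
      rfl
    rw [sum_conv_lindley_succ, ← ih, map_nsmul, succ_nsmul']

theorem integral_lindley_succ {E : Type*} [NormedAddCommGroup E] [NormedSpace ℝ E]
    {μ : Measure G} [IsFiniteMeasure μ] {f : G → E} (n : ℕ)
    (hf : Integrable f (lindley μ (n + 1)))
    (hf' : ∀ i j, Integrable f ((convPow μ i).map posPart ∗ lindley μ j)) :
    ((n : ℝ) + 1) • ∫ x, f x ∂lindley μ (n + 1) =
      ∑ p ∈ antidiagonal n, ∫ x, f x ∂((convPow μ (p.1 + 1)).map posPart ∗ lindley μ p.2) := by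
  rw [← integral_finsetSum_measure fun p _ ↦ hf' (p.1 + 1) p.2, ← spitzer_identity,
    ← Nat.cast_add_one, Nat.cast_smul_eq_nsmul, ← card_range (n + 1), ← sum_const, ← sum_const,
    integral_finsetSum_measure fun _ _ ↦ ?_]
  rwa [card_range]

end SpitzerIdentity

section PowerSeries

open PowerSeries

theorem coeff_mk_one_mul {R : Type*} [Semiring R] (F : R⟦X⟧) (n : ℕ) :
    coeff n (PowerSeries.mk 1 * F) = ∑ k ∈ range (n + 1), coeff k F := by
  rw [coeff_mul, Nat.sum_antidiagonal_eq_sum_range_succ_mk,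
    ← sum_range_reflect (fun k ↦ coeff k F)]
  simp

theorem eq_mk_one_mul_of_derivative_eq {R : Type*} [CommRing R] [IsAddTorsionFree R]
    {F H : R⟦X⟧} (hFH : constantCoeff F = constantCoeff H)
    (h : d⁄dX R F = PowerSeries.mk 1 * (d⁄dX R H + F)) : F = PowerSeries.mk 1 * H := by
  have geom : (1 - X : R⟦X⟧) * PowerSeries.mk 1 = 1 := by
    rw [mul_comm, mk_one_mul_one_sub_eq_one]
  have one_sub_mul : (1 - X) * F = H := by
    refine derivative.ext ?_ (by simp [hFH])
    calc d⁄dX R ((1 - X) * F) = (1 - X) * d⁄dX R F - F := by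
          simp [Derivation.leibniz]; ring
      _ = d⁄dX R H := by rw [h, ← mul_assoc, geom]; ring
  rw [← one_sub_mul, ← mul_assoc, mk_one_mul_one_sub_eq_one, one_mul]

variable {K : Type*} [Field K]

/-- The series `∑_{k ≥ 1} a k * X ^ k / k` occurring in the exponent of Spitzer's formula. The
junk value `a 0 / 0 = 0` is the vanishing constant coefficient. -/
def logSeries (a : ℕ → K) : K⟦X⟧ := PowerSeries.mk fun k ↦ a k / k

@[simp]
theorem coeff_logSeries (a : ℕ → K) (k : ℕ) : coeff k (logSeries a) = a k / k := coeff_mk _ _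

@[simp]
theorem constantCoeff_logSeries (a : ℕ → K) : constantCoeff (logSeries a) = 0 := by
  simp [← coeff_zero_eq_constantCoeff_apply]

theorem sum_range_succ_eq_sum_Icc_one {M : Type*} [AddCommMonoid M] {f : ℕ → M} (hf : f 0 = 0)
    (n : ℕ) : ∑ k ∈ range (n + 1), f k = ∑ k ∈ Icc 1 n, f k := by
  rw [sum_range_succ', hf, add_zero, range_eq_Ico, sum_Ico_add']
  rfl

theorem coeff_mk_one_mul_logSeries_sq_add (a b : ℕ → K) (n : ℕ) :
    coeff n (PowerSeries.mk 1 * (logSeries a ^ 2 + logSeries b)) =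
      ∑ k ∈ Icc 1 n, ∑ l ∈ Icc 1 (n - k), 1 / ((k : K) * l) * a k * a l +
        ∑ k ∈ Icc 1 n, 1 / (k : K) * b k := by
  rw [mul_add, map_add, sq, mul_left_comm, coeff_mul,
    Nat.sum_antidiagonal_eq_sum_range_succ_mk, coeff_mk_one_mul]
  simp only [coeff_mk_one_mul, coeff_logSeries]
  rw [sum_range_succ_eq_sum_Icc_one (by simp), sum_range_succ_eq_sum_Icc_one (by simp)]
  congr 1
  · refine sum_congr rfl fun k _ ↦ ?_
    rw [sum_range_succ_eq_sum_Icc_one (by simp), mul_sum]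
    exact sum_congr rfl fun l _ ↦ by ring
  · exact sum_congr rfl fun k _ ↦ by ring

variable [CharZero K]

theorem derivative_logSeries (a : ℕ → K) :
    d⁄dX K (logSeries a) = PowerSeries.mk fun k ↦ a (k + 1) := by
  ext n
  have : (n : K) + 1 ≠ 0 := n.cast_add_one_ne_zero
  simp [coeff_derivative, div_mul_cancel₀ _ this]

theorem mk_eq_mk_one_mul_logSeries {a m : ℕ → K} (hm : m 0 = 0)
    (h : ∀ n : ℕ, (n + 1) * m (n + 1) = ∑ p ∈ antidiagonal n, (a (p.1 + 1) + m p.2)) :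
    PowerSeries.mk m = PowerSeries.mk 1 * logSeries a := by
  refine eq_mk_one_mul_of_derivative_eq (by simp [hm]) ?_
  rw [derivative_logSeries, mul_add, mul_comm]
  ext n
  simp [coeff_derivative, coeff_mul, mul_comm _ ((n : K) + 1), h, sum_add_distrib]

theorem mk_eq_mk_one_mul_logSeries_sq_add {a b m₁ m₂ : ℕ → K} (hm₁ : m₁ 0 = 0) (hm₂ : m₂ 0 = 0)
    (h₁ : ∀ n : ℕ, (n + 1) * m₁ (n + 1) = ∑ p ∈ antidiagonal n, (a (p.1 + 1) + m₁ p.2))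
    (h₂ : ∀ n : ℕ, (n + 1) * m₂ (n + 1) =
      ∑ p ∈ antidiagonal n, (b (p.1 + 1) + 2 * (a (p.1 + 1) * m₁ p.2) + m₂ p.2)) :
    PowerSeries.mk m₂ = PowerSeries.mk 1 * (logSeries a ^ 2 + logSeries b) := by
  refine eq_mk_one_mul_of_derivative_eq (by simp [hm₂]) ?_
  have recursion : d⁄dX K (PowerSeries.mk m₂) = d⁄dX K (logSeries b) * PowerSeries.mk 1 +
      2 * (d⁄dX K (logSeries a) * PowerSeries.mk m₁) + PowerSeries.mk 1 * PowerSeries.mk m₂ := by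
    rw [derivative_logSeries, derivative_logSeries, two_mul]
    ext n
    simp [coeff_derivative, coeff_mul, mul_comm _ ((n : K) + 1), h₂, sum_add_distrib, two_mul]
  rw [recursion, mk_eq_mk_one_mul_logSeries hm₁ h₁, map_add, sq, Derivation.leibniz, smul_eq_mul]
  ring

end PowerSeries

section Moments

theorem memLp_dirac {α E : Type*} [MeasurableSpace α] [MeasurableSingletonClass α]
    [NormedAddCommGroup E] (f : α → E) (a : α) (p : ℝ≥0∞) : MemLp f p (Measure.dirac a) :=
  (memLp_const (f a)).ae_eq (ae_eq_dirac f).symm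

theorem memLp_posPart_conv {A B : Measure ℝ} [IsProbabilityMeasure A] [IsProbabilityMeasure B]
    {p : ℝ≥0∞} (hA : MemLp posPart p A) (hB : MemLp posPart p B) : MemLp posPart p (A ∗ B) := by
  rw [Measure.conv, memLp_map_measure_iff (by fun_prop) (by fun_prop)]
  refine ((hA.comp_fst B).add (hB.comp_snd A)).mono (by fun_prop) (ae_of_all _ fun z ↦ ?_)
  simp only [Function.comp_apply, Pi.add_apply, Real.norm_eq_abs, abs_of_nonneg, posPart_nonneg,
    add_nonneg]
  exact sup_le (add_le_add (le_posPart _) (le_posPart _))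
    (add_nonneg (posPart_nonneg _) (posPart_nonneg _))

theorem memLp_posPart_convPow {μ : Measure ℝ} [IsProbabilityMeasure μ] {p : ℝ≥0∞}
    (hμ : MemLp posPart p μ) (n : ℕ) : MemLp posPart p (convPow μ n) := by
  induction n with
  | zero => exact memLp_dirac _ _ _
  | succ n ih => exact memLp_posPart_conv hμ ih

theorem memLp_id_map_posPart {A : Measure ℝ} {p : ℝ≥0∞} :
    MemLp id p (A.map posPart) ↔ MemLp posPart p A :=
  memLp_map_measure_iff (by fun_prop) measurable_posPart.aemeasurable

theorem memLp_id_lindley {μ : Measure ℝ} [IsProbabilityMeasure μ] {p : ℝ≥0∞}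
    (hμ : MemLp posPart p μ) (n : ℕ) : MemLp id p (lindley μ n) := by
  induction n with
  | zero => exact memLp_dirac _ _ _
  | succ n ih => exact memLp_id_map_posPart.2 (memLp_posPart_conv hμ ih.pos_part)

theorem memLp_id_conv {A B : Measure ℝ} [IsProbabilityMeasure A] [IsProbabilityMeasure B]
    {p : ℝ≥0∞} (hA : MemLp id p A) (hB : MemLp id p B) : MemLp id p (A ∗ B) := by
  rw [Measure.conv, memLp_map_measure_iff (by fun_prop) (by fun_prop)]
  exact (hA.comp_fst B).add (hB.comp_snd A)

theorem integral_id_conv {A B : Measure ℝ} [IsProbabilityMeasure A] [IsProbabilityMeasure B]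
    (hA : Integrable id A) (hB : Integrable id B) :
    ∫ x, x ∂(A ∗ B) = ∫ x, x ∂A + ∫ x, x ∂B := by
  have fst : Integrable (fun z : ℝ × ℝ ↦ z.1) (A.prod B) := hA.comp_fst B
  have snd : Integrable (fun z : ℝ × ℝ ↦ z.2) (A.prod B) := hB.comp_snd A
  rw [Measure.conv, integral_map (by fun_prop) (by fun_prop), integral_add fst snd,
    integral_fun_fst (fun x ↦ x), integral_fun_snd (fun x ↦ x)]
  simp

theorem integral_sq_conv {A B : Measure ℝ} [IsProbabilityMeasure A] [IsProbabilityMeasure B]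
    (hA : MemLp id 2 A) (hB : MemLp id 2 B) :
    ∫ x, x ^ 2 ∂(A ∗ B) =
      ∫ x, x ^ 2 ∂A + 2 * ((∫ x, x ∂A) * ∫ x, x ∂B) + ∫ x, x ^ 2 ∂B := by
  have sq_fst : Integrable (fun z : ℝ × ℝ ↦ z.1 ^ 2) (A.prod B) := (hA.comp_fst B).integrable_sq
  have sq_snd : Integrable (fun z : ℝ × ℝ ↦ z.2 ^ 2) (A.prod B) := (hB.comp_snd A).integrable_sq
  have cross : Integrable (fun z : ℝ × ℝ ↦ 2 * (z.1 * z.2)) (A.prod B) :=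
    ((hA.integrable one_le_two).mul_prod (hB.integrable one_le_two)).const_mul 2
  have expand (z : ℝ × ℝ) : (z.1 + z.2) ^ 2 = z.1 ^ 2 + 2 * (z.1 * z.2) + z.2 ^ 2 := by ring
  rw [Measure.conv, integral_map (by fun_prop) (by fun_prop)]
  simp only [expand]
  rw [integral_add (by exact sq_fst.add cross) sq_snd, integral_add sq_fst cross,
    integral_const_mul, integral_prod_mul (fun x ↦ x) (fun x ↦ x), integral_fun_fst (fun x ↦ x ^ 2),
    integral_fun_snd (fun x ↦ x ^ 2)]
  simp

theorem integral_id_lindley_succ {μ : Measure ℝ} [IsProbabilityMeasure μ]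
    (hμ : Integrable posPart μ) (n : ℕ) :
    ((n : ℝ) + 1) * ∫ x, x ∂lindley μ (n + 1) =
      ∑ p ∈ antidiagonal n, (∫ x, x⁺ ∂convPow μ (p.1 + 1) + ∫ x, x ∂lindley μ p.2) := by
  have hpos : Measurable (posPart : ℝ → ℝ) := measurable_posPart
  rw [← memLp_one_iff_integrable] at hμ
  have posPart_memLp (k : ℕ) : MemLp id 1 ((convPow μ k).map posPart) :=
    memLp_id_map_posPart.2 (memLp_posPart_convPow hμ k)
  have lindley_memLp (k : ℕ) : MemLp id 1 (lindley μ k) := memLp_id_lindley hμ k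
  refine (integral_lindley_succ n ((lindley_memLp _).integrable le_rfl) fun i j ↦
    (memLp_id_conv (posPart_memLp i) (lindley_memLp j)).integrable le_rfl).trans <|
    sum_congr rfl fun p _ ↦ ?_
  simp only [id_eq]
  rw [integral_id_conv ((posPart_memLp _).integrable le_rfl)
    ((lindley_memLp _).integrable le_rfl), integral_map hpos.aemeasurable (by fun_prop)]

theorem integral_sq_lindley_succ {μ : Measure ℝ} [IsProbabilityMeasure μ]
    (hμ : MemLp posPart 2 μ) (n : ℕ) :
    ((n : ℝ) + 1) * ∫ x, x ^ 2 ∂lindley μ (n + 1) =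
      ∑ p ∈ antidiagonal n, (∫ x, x⁺ ^ 2 ∂convPow μ (p.1 + 1) +
        2 * ((∫ x, x⁺ ∂convPow μ (p.1 + 1)) * ∫ x, x ∂lindley μ p.2) +
        ∫ x, x ^ 2 ∂lindley μ p.2) := by
  have hpos : Measurable (posPart : ℝ → ℝ) := measurable_posPart
  have posPart_memLp (k : ℕ) : MemLp id 2 ((convPow μ k).map posPart) :=
    memLp_id_map_posPart.2 (memLp_posPart_convPow hμ k)
  have lindley_memLp (k : ℕ) : MemLp id 2 (lindley μ k) := memLp_id_lindley hμ k
  refine (integral_lindley_succ n (lindley_memLp _).integrable_sq fun i j ↦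
    (memLp_id_conv (posPart_memLp i) (lindley_memLp j)).integrable_sq).trans <|
    sum_congr rfl fun p _ ↦ ?_
  simp only [id_eq]
  rw [integral_sq_conv (posPart_memLp _) (lindley_memLp _),
    integral_map hpos.aemeasurable (by fun_prop), integral_map hpos.aemeasurable (by fun_prop)]

theorem integral_sq_lindley {μ : Measure ℝ} [IsProbabilityMeasure μ] (hμ : MemLp posPart 2 μ)
    (n : ℕ) :
    ∫ x, x ^ 2 ∂lindley μ n =
      ∑ k ∈ Icc 1 n, ∑ l ∈ Icc 1 (n - k),
          1 / ((k : ℝ) * l) * (∫ x, x⁺ ∂convPow μ k) * (∫ x, x⁺ ∂convPow μ l) +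
        ∑ k ∈ Icc 1 n, 1 / (k : ℝ) * ∫ x, x⁺ ^ 2 ∂convPow μ k := by
  rw [← coeff_mk_one_mul_logSeries_sq_add, ← mk_eq_mk_one_mul_logSeries_sq_add
    (m₁ := fun k ↦ ∫ x, x ∂lindley μ k) (m₂ := fun k ↦ ∫ x, x ^ 2 ∂lindley μ k)
    (by simp [lindley]) (by simp [lindley])
    (integral_id_lindley_succ (hμ.integrable one_le_two)) (integral_sq_lindley_succ hμ),
    PowerSeries.coeff_mk]

end Moments

section Laws

theorem indepFun_zero_shift {Ω E : Type*} [MeasurableSpace Ω] [MeasurableSpace E] {P : Measure Ω}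
    {X : ℕ → Ω → E} (hindep : iIndepFun X P) (hX : ∀ i, AEMeasurable (X i) P) :
    IndepFun (X 0) (fun ω i ↦ X (i + 1) ω) P := by
  have := hindep.isProbabilityMeasure
  refine IndepFun.indepFun_process₀ (hX 0) (fun i ↦ hX (i + 1)) fun I ↦ ?_
  have disj : Disjoint ({0} : Finset ℕ) (I.image Nat.succ) := by simp
  have eval_zero : Measurable fun v : ({0} : Finset ℕ) → E ↦ v ⟨0, mem_singleton_self 0⟩ :=
    measurable_pi_apply _
  have reindex : Measurable fun (v : I.image Nat.succ → E) (i : I) ↦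
      v ⟨i + 1, mem_image_of_mem _ i.2⟩ := by fun_prop
  exact (hindep.indepFun_finset₀ _ _ disj hX).comp eval_zero reindex

variable {G : Type*} [AddCommGroup G] [LinearOrder G]

/-- `max (0, S₁, …, Sₙ)` for the partial sums `S` of `x`. The paper's `S̄ₙ⁺`: the maximum starts at
the empty sum `S₀ = 0`. -/
def maxPartialSum (n : ℕ) (x : ℕ → G) : G :=
  (range (n + 1)).sup' nonempty_range_add_one fun k ↦ ∑ i ∈ range k, x i

theorem maxPartialSum_le_iff {n : ℕ} {x : ℕ → G} {c : G} :
    maxPartialSum n x ≤ c ↔ ∀ k ≤ n, ∑ i ∈ range k, x i ≤ c := by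
  simp [maxPartialSum]

theorem posPart_sup'_Icc_one {n : ℕ} (hn : 1 ≤ n) (x : ℕ → G) :
    ((Icc 1 n).sup' (nonempty_Icc.2 hn) fun k ↦ ∑ i ∈ range k, x i)⁺ = maxPartialSum n x := by
  refine eq_of_forall_ge_iff fun c ↦ ?_
  rw [maxPartialSum_le_iff, posPart_def, sup_le_iff, sup'_le_iff]
  constructor
  · rintro ⟨partial_le, zero_le⟩ k hk
    rcases k.eq_zero_or_pos with rfl | k_pos
    · simpa using zero_le
    · exact partial_le k (mem_Icc.2 ⟨k_pos, hk⟩)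
  · intro h
    exact ⟨fun k hk ↦ h k (mem_Icc.1 hk).2, by simpa using h 0 n.zero_le⟩

theorem maxPartialSum_succ [IsOrderedAddMonoid G] (n : ℕ) (x : ℕ → G) :
    maxPartialSum (n + 1) x = (x 0 + maxPartialSum n fun i ↦ x (i + 1))⁺ := by
  refine eq_of_forall_ge_iff fun c ↦ ?_
  rw [maxPartialSum_le_iff, posPart_def, sup_le_iff, ← le_sub_iff_add_le', maxPartialSum_le_iff]
  simp only [← Nat.lt_succ_iff]
  rw [Nat.forall_lt_succ_left]
  simp [sum_range_succ', le_sub_iff_add_le, and_comm]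

variable [MeasurableSpace G] [MeasurableAdd₂ G]

theorem measurable_maxPartialSum [MeasurableSup₂ G] (n : ℕ) :
    Measurable (maxPartialSum n : (ℕ → G) → G) :=
  measurable_range_sup'' fun k _ ↦ by fun_prop

theorem hasLaw_maxPartialSum [IsOrderedAddMonoid G] [MeasurableSup₂ G] {Ω : Type*}
    [MeasurableSpace Ω] {P : Measure Ω} {μ : Measure G} [IsProbabilityMeasure μ] {X : ℕ → Ω → G}
    (hindep : iIndepFun X P) (hX : ∀ i, HasLaw (X i) μ P) (n : ℕ) :
    HasLaw (fun ω ↦ maxPartialSum n (X · ω)) (lindley μ n) P := by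
  induction n generalizing X with
  | zero =>
    have := (hX 0).isProbabilityMeasure
    simpa [lindley, maxPartialSum] using hasLaw_dirac_of_ae_eq (ae_of_all P fun _ ↦ rfl)
  | succ n ih =>
    have shift := ih (hindep.precomp (g := Nat.succ) Nat.succ_injective) fun i ↦ hX (i + 1)
    have indep_shift := (indepFun_zero_shift hindep fun i ↦ (hX i).aemeasurable).comp
      measurable_id (measurable_maxPartialSum n)
    have add_law := indep_shift.hasLaw_fun_add (hX 0) shift
    simp only [maxPartialSum_succ]
    exact HasLaw.fun_comp ⟨measurable_posPart.aemeasurable, rfl⟩ add_law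

end Laws

end Spitzer

open Spitzer in
theorem stmt15_general {Ω : Type*} [MeasurableSpace Ω] {P : Measure Ω}
    (X : ℕ → Ω → ℝ) (hindep : iIndepFun X P)
    (hident : ∀ i, IdentDistrib (X i) (X 0) P P)
    (hL2 : MemLp (fun ω ↦ max (X 0 ω) 0) 2 P)
    (S : ℕ → Ω → ℝ) (hS : ∀ n ω, S n ω = ∑ i ∈ Finset.range n, X i ω)
    (Sbar : ℕ → Ω → ℝ)
    (hSbar : ∀ n, ∀ hn : 1 ≤ n, ∀ ω, Sbar n ω =
      (Finset.Icc 1 n).sup' (Finset.nonempty_Icc.mpr hn) (fun k => S k ω)) :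
    ∀ n, 1 ≤ n →
      ∫ ω, (max (Sbar n ω) 0) ^ 2 ∂P
        = (∑ k ∈ Finset.Icc 1 n, ∑ l ∈ Finset.Icc 1 (n - k),
            (1 / ((k : ℝ) * (l : ℝ))) * (∫ ω, max (S k ω) 0 ∂P)
              * (∫ ω, max (S l ω) 0 ∂P))
          + ∑ k ∈ Finset.Icc 1 n, (1 / (k : ℝ)) * ∫ ω, (max (S k ω) 0) ^ 2 ∂P := by
  intro n hn
  obtain rfl : S = fun k ↦ ∑ i ∈ Finset.range k, X i := by ext; simp [hS]
  set μ := P.map (X 0)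
  have := hindep.isProbabilityMeasure
  have X_law (i : ℕ) : HasLaw (X i) μ P := ⟨(hident i).aemeasurable_fst, (hident i).map_eq⟩
  have : IsProbabilityMeasure μ := Measure.isProbabilityMeasure_map (X_law 0).aemeasurable
  have hpos : Measurable (posPart : ℝ → ℝ) := measurable_posPart
  have moment : MemLp posPart 2 μ :=
    (memLp_map_measure_iff hpos.aestronglyMeasurable (X_law 0).aemeasurable).2 hL2
  have S_law (k : ℕ) := hasLaw_sum_range hindep X_law k
  have mean (k : ℕ) : ∫ ω, max ((∑ i ∈ Finset.range k, X i) ω) 0 ∂P = ∫ x, x⁺ ∂convPow μ k :=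
    (S_law k).integral_comp hpos.aestronglyMeasurable
  have secondMoment (k : ℕ) :
      ∫ ω, max ((∑ i ∈ Finset.range k, X i) ω) 0 ^ 2 ∂P = ∫ x, x⁺ ^ 2 ∂convPow μ k :=
    (S_law k).integral_comp (f := fun x ↦ x⁺ ^ 2) (by fun_prop)
  have Sbar_eq (ω : Ω) : max (Sbar n ω) 0 = maxPartialSum n (X · ω) := by
    simp only [hSbar n hn, Finset.sum_apply]
    exact posPart_sup'_Icc_one hn (X · ω)
  have secondMoment_max : ∫ ω, max (Sbar n ω) 0 ^ 2 ∂P = ∫ x, x ^ 2 ∂lindley μ n := by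
    simp only [Sbar_eq]
    exact (hasLaw_maxPartialSum hindep X_law n).integral_comp (f := fun x ↦ x ^ 2) (by fun_prop)
  simp only [mean, secondMoment, secondMoment_max]
  exact integral_sq_lindley moment n

/-- The identity, derived from Spitzer's formula, for the second moment of the
positive part of the maximum of partial sums of i.i.d. random variables with
finite second moment:
`E[(S̄ₙ⁺)²] = Σ_{k,l ≥ 1, k+l ≤ n} E[S_k⁺] E[S_l⁺]/(k l) + Σ_{k=1}^n E[(S_k⁺)²]/k`. -/
theorem stmt15 {Ω : Type*} [MeasureSpace Ω] [IsProbabilityMeasure (ℙ : Measure Ω)]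
    (X : ℕ → Ω → ℝ) (hmeas : ∀ i, Measurable (X i))
    (hindep : iIndepFun X ℙ)
    (hident : ∀ i, Measure.map (X i) ℙ = Measure.map (X 0) ℙ)
    (hL2 : MemLp (X 0) 2 ℙ)
    (S : ℕ → Ω → ℝ) (hS : ∀ n ω, S n ω = ∑ i ∈ Finset.range n, X i ω)
    (Sbar : ℕ → Ω → ℝ)
    (hSbar : ∀ n, ∀ hn : 1 ≤ n, ∀ ω, Sbar n ω =
      (Finset.Icc 1 n).sup' (Finset.nonempty_Icc.mpr hn) (fun k => S k ω)) :
    ∀ n, 1 ≤ n →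
      ∫ ω, (max (Sbar n ω) 0) ^ 2 ∂ℙ
        = (∑ k ∈ Finset.Icc 1 n, ∑ l ∈ Finset.Icc 1 (n - k),
            (1 / ((k : ℝ) * (l : ℝ))) * (∫ ω, max (S k ω) 0 ∂ℙ)
              * (∫ ω, max (S l ω) 0 ∂ℙ))
          + ∑ k ∈ Finset.Icc 1 n, (1 / (k : ℝ)) * ∫ ω, (max (S k ω) 0) ^ 2 ∂ℙ := by
  exact stmt15_general X hindep
    (fun i ↦ ⟨(hmeas i).aemeasurable, (hmeas 0).aemeasurable, hident i⟩) hL2.pos_part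
    S hS Sbar hSbar
end

section
/- Let X₁, X₂, … be i.i.d. real random variables with mean 0 and variance 1, S_n := X₁+…+X_n, and x⁺ := max(x,0). Then E[S_n⁺]/√n → 1/√(2π) and E[(S_n⁺)²]/n → 1/2 as n → ∞. -/
open MeasureTheory ProbabilityTheory Filter
open scoped ENNReal

/-!
By the central limit theorem `(Sₙ - n m) / √n` converges in distribution to a centred Gaussian `Z`,
and its second moments converge to that of `Z` because they are constant. For a continuous `f`
with `|f| ≤ g`, Fatou's lemma for weak convergence applied to `g + f` and `g - f` shows that
convergence of the `g`-moments forces convergence of the `f`-moments. The choice `g = C (1 + x²)`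
covers both `x⁺` and `(x⁺)²`, and the Gaussian moments are computed directly.
-/

open scoped Topology Real NNReal

section WeakConvergence

variable {E : Type*} [TopologicalSpace E] [MeasurableSpace E] [OpensMeasurableSpace E]
  [HasOuterApproxClosed E] {μs : ℕ → ProbabilityMeasure E} {μ : ProbabilityMeasure E}
  {f g : E → ℝ}

lemma eventually_lt_integral_of_nonneg (hμ : Tendsto μs atTop (𝓝 μ)) (hf : Continuous f)
    (hf₀ : 0 ≤ f) (hint : ∀ n, Integrable f (μs n)) {c : ℝ} (hc : c < ∫ x, f x ∂μ) :
    ∀ᶠ n in atTop, c < ∫ x, f x ∂(μs n) := by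
  rcases lt_or_ge c 0 with hc₀ | hc₀
  · exact .of_forall fun n => hc₀.trans_le (integral_nonneg hf₀)
  have hfμ : Integrable f μ := .of_integral_ne_zero (hc₀.trans_lt hc).ne'
  have fatou := lintegral_le_liminf_lintegral_of_forall_isOpen_measure_le_liminf_measure hf hf₀
    fun _ hG => ProbabilityMeasure.le_liminf_measure_open_of_tendsto hμ hG
  simp only [← ofReal_integral_eq_lintegral_ofReal hfμ (.of_forall hf₀),
    ← ofReal_integral_eq_lintegral_ofReal (hint _) (.of_forall hf₀)] at fatou
  have hlt := ((ENNReal.ofReal_lt_ofReal_iff_of_nonneg hc₀).2 hc).trans_le fatou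
  filter_upwards [eventually_lt_of_lt_liminf hlt] with n hn
  exact (ENNReal.ofReal_lt_ofReal_iff_of_nonneg hc₀).1 hn

lemma eventually_lt_integral_of_abs_le (hμ : Tendsto μs atTop (𝓝 μ)) (hf : Continuous f)
    (hg : Continuous g) (hfg : ∀ x, |f x| ≤ g x) (hgs : ∀ n, Integrable g (μs n))
    (hgμ : Integrable g μ)
    (hlim : Tendsto (fun n => ∫ x, g x ∂(μs n)) atTop (𝓝 (∫ x, g x ∂μ)))
    {c : ℝ} (hc : c < ∫ x, f x ∂μ) : ∀ᶠ n in atTop, c < ∫ x, f x ∂(μs n) := by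
  have integrable_f {ν : Measure E} (hν : Integrable g ν) : Integrable f ν :=
    hν.mono' hf.aestronglyMeasurable (.of_forall hfg)
  have hnonneg : 0 ≤ g + f := fun x => neg_le_iff_add_nonneg'.1 (neg_le_of_abs_le (hfg x))
  obtain ⟨d, hcd, hdf⟩ := exists_between hc
  have hsum : d + ∫ x, g x ∂μ < ∫ x, (g + f) x ∂μ := by
    rw [integral_add' hgμ (integrable_f hgμ)]
    linarith
  have hupper : ∫ x, g x ∂μ < d - c + ∫ x, g x ∂μ := by linarith
  filter_upwards [hlim.eventually_lt_const hupper,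
    eventually_lt_integral_of_nonneg hμ (hg.add hf) hnonneg
      (fun n => (hgs n).add (integrable_f (hgs n))) hsum] with n hgn hsn
  rw [integral_add' (hgs n) (integrable_f (hgs n))] at hsn
  linarith

theorem tendsto_integral_of_abs_le (hμ : Tendsto μs atTop (𝓝 μ)) (hf : Continuous f)
    (hg : Continuous g) (hfg : ∀ x, |f x| ≤ g x) (hgs : ∀ n, Integrable g (μs n))
    (hgμ : Integrable g μ)
    (hlim : Tendsto (fun n => ∫ x, g x ∂(μs n)) atTop (𝓝 (∫ x, g x ∂μ))) :
    Tendsto (fun n => ∫ x, f x ∂(μs n)) atTop (𝓝 (∫ x, f x ∂μ)) := by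
  refine tendsto_order.2 ⟨fun c hc =>
    eventually_lt_integral_of_abs_le hμ hf hg hfg hgs hgμ hlim hc, fun c hc => ?_⟩
  have hneg : -c < ∫ x, (-f) x ∂μ := by rwa [integral_neg', neg_lt_neg_iff]
  have hneg_le (x : E) : |(-f) x| ≤ g x := (abs_neg (f x)).trans_le (hfg x)
  filter_upwards [eventually_lt_integral_of_abs_le hμ hf.neg hg hneg_le hgs hgμ hlim hneg]
    with n hn
  rwa [integral_neg', neg_lt_neg_iff] at hn

theorem tendsto_integral_comp_of_tendstoInDistribution {Ω : ℕ → Type*} {Ω' : Type*}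
    {mΩ : ∀ n, MeasurableSpace (Ω n)} {mΩ' : MeasurableSpace Ω'} {P : ∀ n, Measure (Ω n)}
    [∀ n, IsProbabilityMeasure (P n)] {P' : Measure Ω'} [IsProbabilityMeasure P']
    {Y : ∀ n, Ω n → E} {Z : Ω' → E} (hY : TendstoInDistribution Y atTop Z P P')
    (hf : Continuous f) (hg : Continuous g) (hfg : ∀ x, |f x| ≤ g x)
    (hgY : ∀ n, Integrable (fun ω => g (Y n ω)) (P n))
    (hgZ : Integrable (fun ω => g (Z ω)) P')
    (hlim : Tendsto (fun n => ∫ ω, g (Y n ω) ∂(P n)) atTop (𝓝 (∫ ω, g (Z ω) ∂P'))) :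
    Tendsto (fun n => ∫ ω, f (Y n ω) ∂(P n)) atTop (𝓝 (∫ ω, f (Z ω) ∂P')) := by
  have hYm := hY.forall_aemeasurable
  have hZm := hY.aemeasurable_limit
  have key := tendsto_integral_of_abs_le hY.tendsto hf hg hfg
    (fun n => (integrable_map_measure hg.aestronglyMeasurable (hYm n)).2 (hgY n))
    ((integrable_map_measure hg.aestronglyMeasurable hZm).2 hgZ)
  simp only [ProbabilityMeasure.coe_mk, integral_map (hYm _) hg.aestronglyMeasurable,
    integral_map (hYm _) hf.aestronglyMeasurable, integral_map hZm hg.aestronglyMeasurable,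
    integral_map hZm hf.aestronglyMeasurable] at key
  exact key hlim

end WeakConvergence

section Gaussian

lemma max_zero_sq_le_sq {R : Type*} [Ring R] [LinearOrder R] [IsStrictOrderedRing R] (x : R) :
    max x 0 ^ 2 ≤ x ^ 2 :=
  sq_le_sq.2 (abs_max_le_max_abs_abs.trans (by simp))

lemma integral_max_zero_sq_of_isNegInvariant {ν : Measure ℝ} [ν.IsNegInvariant]
    (hν : Integrable (fun x => x ^ 2) ν) : ∫ x, max x 0 ^ 2 ∂ν = (∫ x, x ^ 2 ∂ν) / 2 := by
  have hpos : Integrable (fun x : ℝ => max x 0 ^ 2) ν := by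
    refine hν.mono' (by fun_prop) (.of_forall fun x => ?_)
    rw [Real.norm_of_nonneg (sq_nonneg _)]
    exact max_zero_sq_le_sq x
  have hsplit (x : ℝ) : x ^ 2 = max x 0 ^ 2 + max (-x) 0 ^ 2 := by
    rcases le_total x 0 with h | h <;> simp [h]
  have hreflect : ∫ x, max (-x) 0 ^ 2 ∂ν = ∫ x, max x 0 ^ 2 ∂ν :=
    integral_neg_eq_self (fun x => max x 0 ^ 2) ν
  rw [integral_congr_ae (.of_forall hsplit), integral_add hpos hpos.comp_neg, hreflect,
    add_self_div_two]

instance isNegInvariant_gaussianReal_zero (v : ℝ≥0) : (gaussianReal 0 v).IsNegInvariant :=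
  ⟨gaussianReal_map_neg.trans (by rw [neg_zero])⟩

lemma integrable_sq_gaussianReal (m : ℝ) (v : ℝ≥0) :
    Integrable (fun x => x ^ 2) (gaussianReal m v) :=
  (memLp_id_gaussianReal 2).integrable_sq

lemma integral_sq_gaussianReal_zero (v : ℝ≥0) : ∫ x, x ^ 2 ∂(gaussianReal 0 v) = v := by
  rw [← variance_of_integral_eq_zero aemeasurable_id' (by simp), variance_fun_id_gaussianReal]

lemma integral_max_zero_sq_gaussianReal_zero (v : ℝ≥0) :
    ∫ x, max x 0 ^ 2 ∂(gaussianReal 0 v) = v / 2 := by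
  rw [integral_max_zero_sq_of_isNegInvariant (integrable_sq_gaussianReal 0 v),
    integral_sq_gaussianReal_zero]

lemma integral_Ioi_mul_exp_neg_mul_sq {b : ℝ} (hb : 0 < b) :
    ∫ x in Set.Ioi (0 : ℝ), x * Real.exp (-b * x ^ 2) = (2 * b)⁻¹ := by
  have hGamma := integral_rpow_mul_exp_neg_mul_rpow two_pos (neg_one_lt_zero.trans one_pos) hb
  simp only [Real.rpow_one, Real.rpow_two] at hGamma
  rw [hGamma, one_add_one_eq_two, neg_div, div_self two_ne_zero, Real.rpow_neg_one, Real.Gamma_one,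
    mul_one, one_div, mul_inv_rev, mul_comm]

lemma integral_max_zero_gaussianReal_zero_one :
    ∫ x, max x 0 ∂(gaussianReal 0 1) = 1 / √(2 * π) := by
  have hdensity (x : ℝ) : gaussianPDFReal 0 1 x • max x 0 = (Set.Ioi (0 : ℝ)).indicator
      (fun x => 1 / √(2 * π) * (x * Real.exp (-(1 / 2) * x ^ 2))) x := by
    rcases lt_or_ge 0 x with hx | hx
    · rw [Set.indicator_of_mem (Set.mem_Ioi.2 hx), max_eq_left hx.le]
      simp only [gaussianPDFReal, NNReal.coe_one, sub_zero, mul_one, smul_eq_mul]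
      ring_nf
    · rw [Set.indicator_of_notMem (Set.notMem_Ioi.2 hx), max_eq_right hx, smul_zero]
  simp_rw [integral_gaussianReal_eq_integral_smul one_ne_zero, hdensity]
  rw [integral_indicator measurableSet_Ioi, integral_const_mul,
    integral_Ioi_mul_exp_neg_mul_sq one_half_pos]
  norm_num

lemma integral_max_zero_gaussianReal_zero (v : ℝ≥0) :
    ∫ x, max x 0 ∂(gaussianReal 0 v) = √v / √(2 * π) := by
  have hscale : (gaussianReal 0 1).map (√v * ·) = gaussianReal 0 v := by
    rw [gaussianReal_map_const_mul, mul_zero, mul_one]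
    congr 1
    ext
    exact Real.sq_sqrt v.2
  have hmax (x : ℝ) : max (√v * x) 0 = √v * max x 0 := by
    rw [mul_max_of_nonneg _ _ (Real.sqrt_nonneg _), mul_zero]
  rw [← hscale, integral_map (by fun_prop) (by fun_prop)]
  simp_rw [hmax]
  rw [integral_const_mul, integral_max_zero_gaussianReal_zero_one, mul_one_div]

end Gaussian

section NormalizedSum

variable {Ω : Type*} {mΩ : MeasurableSpace Ω} {P : Measure Ω} {X : ℕ → Ω → ℝ}

/-- The normalized partial sum `(Sₙ - n E[X₀]) / √n` of the central limit theorem, for a sequence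
whose terms all have the mean of `X 0`. Since `(√0)⁻¹ = 0`, it vanishes at `n = 0`. -/
noncomputable def normalizedSum (X : ℕ → Ω → ℝ) (P : Measure Ω) (n : ℕ) (ω : Ω) : ℝ :=
  (√n)⁻¹ * (∑ i ∈ Finset.range n, X i ω - n * P[X 0])

lemma max_normalizedSum_zero (n : ℕ) (ω : Ω) :
    max (normalizedSum X P n ω) 0 =
      (√n)⁻¹ * max (∑ i ∈ Finset.range n, X i ω - n * P[X 0]) 0 := by
  rw [normalizedSum, mul_max_of_nonneg _ _ (by positivity), mul_zero]

lemma memLp_normalizedSum [IsFiniteMeasure P] (hX : MemLp (X 0) 2 P)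
    (hident : ∀ i, IdentDistrib (X i) (X 0) P P) (n : ℕ) : MemLp (normalizedSum X P n) 2 P :=
  ((memLp_finsetSum _ fun i _ => (hident i).memLp_iff.2 hX).sub (memLp_const _)).const_mul _

lemma integral_sum_range_of_identDistrib (hX : Integrable (X 0) P)
    (hident : ∀ i, IdentDistrib (X i) (X 0) P P) (n : ℕ) :
    ∫ ω, ∑ i ∈ Finset.range n, X i ω ∂P = n * P[X 0] := by
  rw [integral_finsetSum _ fun i _ => (hident i).integrable_iff.2 hX]
  simp [fun i => (hident i).integral_eq]

lemma variance_sum_range_of_identDistrib (hX : MemLp (X 0) 2 P)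
    (hindep : Pairwise fun i j => X i ⟂ᵢ[P] X j)
    (hident : ∀ i, IdentDistrib (X i) (X 0) P P) (n : ℕ) :
    Var[fun ω => ∑ i ∈ Finset.range n, X i ω; P] = n * Var[X 0; P] := by
  rw [← Finset.sum_fn, IndepFun.variance_sum (fun i _ => (hident i).memLp_iff.2 hX)
    fun i _ j _ hij => hindep hij]
  simp [fun i => (hident i).variance_eq]

lemma integral_normalizedSum_sq [IsFiniteMeasure P] (hX : MemLp (X 0) 2 P)
    (hindep : Pairwise fun i j => X i ⟂ᵢ[P] X j)
    (hident : ∀ i, IdentDistrib (X i) (X 0) P P) {n : ℕ} (hn : n ≠ 0) :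
    ∫ ω, normalizedSum X P n ω ^ 2 ∂P = Var[X 0; P] := by
  have hcentered : ∫ ω, (∑ i ∈ Finset.range n, X i ω - n * P[X 0]) ^ 2 ∂P = n * Var[X 0; P] := by
    rw [← variance_sum_range_of_identDistrib hX hindep hident, variance_eq_integral
      (Finset.aemeasurable_fun_sum _ fun i _ => (hident i).aemeasurable_fst),
      integral_sum_range_of_identDistrib (hX.integrable one_le_two) hident]
  simp only [normalizedSum, mul_pow]
  rw [integral_const_mul, hcentered, inv_pow, Real.sq_sqrt n.cast_nonneg,
    inv_mul_cancel_left₀ (Nat.cast_ne_zero.2 hn)]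

theorem tendsto_integral_comp_normalizedSum [IsProbabilityMeasure P] (hindep : iIndepFun X P)
    (hident : ∀ i, IdentDistrib (X i) (X 0) P P) (hX : MemLp (X 0) 2 P)
    {f : ℝ → ℝ} (hf : Continuous f) {C : ℝ} (hfC : ∀ x, |f x| ≤ C * (1 + x ^ 2)) :
    Tendsto (fun n => ∫ ω, f (normalizedSum X P n ω) ∂P) atTop
      (𝓝 (∫ x, f x ∂(gaussianReal 0 Var[X 0; P].toNNReal))) := by
  have hclt : TendstoInDistribution (normalizedSum X P) atTop id (fun _ => P)
      (gaussianReal 0 Var[X 0; P].toNNReal) :=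
    tendstoInDistribution_inv_sqrt_mul_sum_sub HasLaw.id hX hindep hident
  have hsq (n : ℕ) : Integrable (fun ω => normalizedSum X P n ω ^ 2) P :=
    (memLp_normalizedSum hX hident n).integrable_sq
  have hsqG := integrable_sq_gaussianReal 0 Var[X 0; P].toNNReal
  refine tendsto_integral_comp_of_tendstoInDistribution hclt hf
    (g := fun x => C * (1 + x ^ 2)) (by fun_prop) hfC
    (fun n => ((integrable_const 1).add (hsq n)).const_mul C)
    (((integrable_const 1).add hsqG).const_mul C) (tendsto_const_nhds.congr' ?_)
  filter_upwards [eventually_ne_atTop 0] with n hn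
  have hpair : Pairwise fun i j => X i ⟂ᵢ[P] X j := fun _ _ => hindep.indepFun
  simp only [integral_const_mul]
  rw [integral_add (integrable_const 1) (hsq n), integral_add (integrable_const 1) hsqG,
    integral_normalizedSum_sq hX hpair hident hn, integral_sq_gaussianReal_zero,
    Real.coe_toNNReal _ (variance_nonneg _ _)]
  simp

end NormalizedSum

theorem stmt16_general {Ω : Type*} {mΩ : MeasurableSpace Ω} {P : Measure Ω}
    [IsProbabilityMeasure P] {X : ℕ → Ω → ℝ} (hindep : iIndepFun X P)
    (hident : ∀ i, IdentDistrib (X i) (X 0) P P) (hX : MemLp (X 0) 2 P) :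
    Tendsto (fun n : ℕ => (∫ ω, max (∑ i ∈ Finset.range n, X i ω - n * P[X 0]) 0 ∂P) / √n) atTop
        (𝓝 (√Var[X 0; P] / √(2 * π))) ∧
      Tendsto (fun n : ℕ => (∫ ω, max (∑ i ∈ Finset.range n, X i ω - n * P[X 0]) 0 ^ 2 ∂P) / n)
        atTop (𝓝 (Var[X 0; P] / 2)) := by
  have max_zero_le (x : ℝ) : |max x 0| ≤ 1 * (1 + x ^ 2) := by
    rw [abs_of_nonneg (le_max_right x 0)]
    exact max_le (by nlinarith [sq_nonneg (x - 1)]) (by positivity)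
  have max_zero_sq_le (x : ℝ) : |max x 0 ^ 2| ≤ 1 * (1 + x ^ 2) := by
    rw [abs_of_nonneg (sq_nonneg _)]
    linarith [max_zero_sq_le_sq x]
  have hfirst := tendsto_integral_comp_normalizedSum hindep hident hX (by fun_prop) max_zero_le
  have hsecond := tendsto_integral_comp_normalizedSum hindep hident hX (by fun_prop) max_zero_sq_le
  rw [integral_max_zero_gaussianReal_zero, Real.coe_toNNReal _ (variance_nonneg _ _)] at hfirst
  rw [integral_max_zero_sq_gaussianReal_zero, Real.coe_toNNReal _ (variance_nonneg _ _)] at hsecond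
  simp only [max_normalizedSum_zero, integral_const_mul] at hfirst
  simp only [max_normalizedSum_zero, mul_pow, inv_pow, Real.sq_sqrt (Nat.cast_nonneg _),
    integral_const_mul] at hsecond
  simp only [div_eq_inv_mul (∫ _, _ ∂P)]
  exact ⟨hfirst, hsecond⟩

/-- For i.i.d. summands with mean `0` and variance `1`:
`E[Sₙ⁺]/√n → 1/√(2π)` and `E[(Sₙ⁺)²]/n → 1/2`. -/
theorem stmt16 {Ω : Type*} [MeasureSpace Ω] [IsProbabilityMeasure (ℙ : Measure Ω)]
    (X : ℕ → Ω → ℝ) (hmeas : ∀ i, Measurable (X i))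
    (hindep : iIndepFun X ℙ)
    (hident : ∀ i, Measure.map (X i) ℙ = Measure.map (X 0) ℙ)
    (hL2 : MemLp (X 0) 2 ℙ)
    (hmean : ∫ ω, X 0 ω ∂ℙ = 0)
    (hvar : ∫ ω, (X 0 ω) ^ 2 ∂ℙ = 1)
    (S : ℕ → Ω → ℝ) (hS : ∀ n ω, S n ω = ∑ i ∈ Finset.range n, X i ω) :
    Tendsto (fun n => (∫ ω, max (S n ω) 0 ∂ℙ) / Real.sqrt n) atTop
        (nhds (1 / Real.sqrt (2 * Real.pi))) ∧
      Tendsto (fun n => (∫ ω, (max (S n ω) 0) ^ 2 ∂ℙ) / n) atTop (nhds (1 / 2)) := by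
  have hvariance := (variance_of_integral_eq_zero (hmeas 0).aemeasurable hmean).trans hvar
  simpa only [hS, hmean, hvariance, mul_zero, sub_zero, Real.sqrt_one] using stmt16_general hindep
    (fun i => ⟨(hmeas i).aemeasurable, (hmeas 0).aemeasurable, hident i⟩) hL2
end

section
/- Let X₁, X₂, … be i.i.d. real random variables with mean 0 and variance 1, S̄_n := max_{1≤k≤n} (X₁+…+X_k), and x⁺ := max(x,0). Then E[(S̄_n⁺)²]/n → 1 as n → ∞. -/
open MeasureTheory ProbabilityTheory Filter
open scoped ENNReal

/-! Let `Mₙ = max (S₁, …, Sₙ₊₁)`. Splitting off the first summand gives `Mₙ₊₁ = X₀ + (M'ₙ)⁺`, where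
`M'ₙ` is built from `X₁, X₂, …`: it is independent of `X₀` and distributed as `Mₙ`. Taking first and
second moments and writing `m⁺ = m + m⁻`, `(m⁺)² = m² - (m⁻)²`, one gets
`E[Mₙ] = ∑_{k<n} E[Mₖ⁻]` and `E[Mₙ²] = (n + 1) σ² - ∑_{k<n} E[(Mₖ⁻)²]`.
Since `Mₖ⁻` decreases in `k`, the first identity and `E[Mₙ]² ≤ E[Mₙ²] ≤ (n + 1) σ²` force
`E[Mₙ⁻] = O(n^(-1/2))`. Hence `Mₙ⁻ → 0` almost surely, and, being dominated by `|X₀|`, also in `L²`,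
so the sum in the second identity is negligible by Cesàro averaging. -/

section MaxPartialSum

variable {α : Type*} [AddCommGroup α] [Lattice α]

/-- The maximum `max (S₁, …, Sₙ₊₁)` of the nonempty partial sums `Sₖ = x 0 + ⋯ + x (k - 1)`, as a
monotone function of `n`. The index is shifted by one so that the maximum over the empty set never
occurs. -/
def maxPartialSum (x : ℕ → α) : ℕ →o α :=
  partialSups fun k ↦ ∑ i ∈ Finset.range (k + 1), x i

lemma maxPartialSum_zero (x : ℕ → α) : maxPartialSum x 0 = x 0 := by
  simp [maxPartialSum]

lemma maxPartialSum_succ [IsOrderedAddMonoid α] (x : ℕ → α) (n : ℕ) :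
    maxPartialSum x (n + 1) = x 0 + (maxPartialSum (fun i ↦ x (i + 1)) n)⁺ := by
  have sum_eq : ((fun k ↦ ∑ i ∈ Finset.range (k + 1), x i) ∘ fun k ↦ k + 1) =
      fun k ↦ x 0 + ∑ i ∈ Finset.range (k + 1), x (i + 1) := by
    funext k
    exact (Finset.sum_range_succ' x (k + 1)).trans (add_comm _ _)
  rw [maxPartialSum, partialSups_add_one', sum_eq, partialSups_const_add, posPart_def, add_sup,
    add_zero, sup_comm]
  simp [maxPartialSum]

lemma sup'_Icc_sum_range_eq_maxPartialSum (x : ℕ → α) (n : ℕ)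
    (h : (Finset.Icc 1 (n + 1)).Nonempty) :
    (Finset.Icc 1 (n + 1)).sup' h (fun k ↦ ∑ i ∈ Finset.range k, x i) = maxPartialSum x n := by
  refine eq_of_forall_ge_iff fun c ↦ ?_
  rw [maxPartialSum, partialSups_le_iff, Finset.sup'_le_iff]
  constructor
  · intro hc k hk
    exact hc (k + 1) (by simpa using hk)
  · intro hc k hk
    obtain ⟨hk₁, hkn⟩ := Finset.mem_Icc.1 hk
    obtain ⟨j, rfl⟩ := Nat.exists_eq_add_of_le' hk₁
    exact hc j (by omega)

lemma negPart_maxPartialSum_antitone [IsOrderedAddMonoid α] (x : ℕ → α) :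
    Antitone fun n ↦ (maxPartialSum x n)⁻ :=
  fun _ _ hmn ↦ negPart_anti ((maxPartialSum x).monotone hmn)

lemma negPart_maxPartialSum_le [IsOrderedAddMonoid α] (x : ℕ → α) (n : ℕ) :
    (maxPartialSum x n)⁻ ≤ (x 0)⁻ := by
  simpa only [maxPartialSum_zero] using negPart_maxPartialSum_antitone x n.zero_le

end MaxPartialSum

lemma measurable_maxPartialSum (n : ℕ) : Measurable fun x : ℕ → ℝ ↦ maxPartialSum x n :=
  (Continuous.partialSups_apply fun _ _ ↦ by fun_prop).measurable

section Independence

variable {Ω ι κ : Type*} {mΩ : MeasurableSpace Ω} {μ : Measure Ω}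

lemma indepFun_pi_of_notMem_range {E : ι → Type*} {mE : ∀ i, MeasurableSpace (E i)}
    {X : ∀ i, Ω → E i} (hindep : iIndepFun X μ) (hX : ∀ i, AEMeasurable (X i) μ)
    {i : ι} {g : κ → ι} (hi : i ∉ Set.range g) :
    IndepFun (X i) (fun ω j ↦ X (g j) ω) μ := by
  classical
  have := hindep.isProbabilityMeasure
  refine IndepFun.indepFun_process₀ (hX i) (fun j ↦ hX (g j)) fun J ↦ ?_
  have disjoint : Disjoint {i} (J.image g) :=
    Finset.disjoint_singleton_left.2 fun h ↦
      hi (Finset.coe_image_subset_range (Finset.mem_coe.2 h))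
  let head : ({i} : Finset ι) := ⟨i, Finset.mem_singleton_self i⟩
  let embed (j : J) : J.image g := ⟨g j, Finset.mem_image_of_mem g j.2⟩
  have measurable_head : Measurable fun x : (∀ k : ({i} : Finset ι), E k) ↦ x head :=
    measurable_pi_apply head
  have measurable_embed : Measurable fun (y : ∀ k : J.image g, E k) (j : J) ↦ y (embed j) :=
    measurable_pi_lambda _ fun j ↦ measurable_pi_apply (embed j)
  exact (hindep.indepFun_finset₀ {i} (J.image g) disjoint hX).comp measurable_head measurable_embed

lemma identDistrib_pi_comp_of_injective [Countable κ] {E : Type*}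
    [MeasurableSpace E] {X : ι → Ω → E} {i₀ : ι} (hindep : iIndepFun X μ)
    (hident : ∀ i, IdentDistrib (X i) (X i₀) μ μ) {g h : κ → ι} (hg : g.Injective)
    (hh : h.Injective) :
    IdentDistrib (fun ω j ↦ X (g j) ω) (fun ω j ↦ X (h j) ω) μ μ :=
  .pi (fun j ↦ (hident (g j)).trans (hident (h j)).symm) (hindep.precomp hg) (hindep.precomp hh)

lemma integral_add_sq_of_indepFun {ξ W : Ω → ℝ} (hξ : MemLp ξ 2 μ) (hW : MemLp W 2 μ)
    (hindep : IndepFun ξ W μ) (hmean : ∫ ω, ξ ω ∂μ = 0) :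
    ∫ ω, (ξ ω + W ω) ^ 2 ∂μ = ∫ ω, ξ ω ^ 2 ∂μ + ∫ ω, W ω ^ 2 ∂μ := by
  have cross : ∫ ω, ξ ω * W ω ∂μ = 0 := by
    rw [hindep.integral_fun_mul_eq_mul_integral hξ.1 hW.1, hmean, zero_mul]
  have integrable_cross : Integrable (fun ω ↦ 2 * (ξ ω * W ω)) μ :=
    (hξ.integrable_mul hW).const_mul 2
  have integrable_squares : Integrable (fun ω ↦ ξ ω ^ 2 + W ω ^ 2) μ :=
    hξ.integrable_sq.add hW.integrable_sq
  calc ∫ ω, (ξ ω + W ω) ^ 2 ∂μ = ∫ ω, ξ ω ^ 2 + W ω ^ 2 + 2 * (ξ ω * W ω) ∂μ := by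
        congr with ω; ring
    _ = ∫ ω, ξ ω ^ 2 ∂μ + ∫ ω, W ω ^ 2 ∂μ := by
        rw [integral_add integrable_squares integrable_cross,
          integral_add hξ.integrable_sq hW.integrable_sq, integral_const_mul, cross, mul_zero,
          add_zero]

lemma sq_integral_le_integral_sq [IsProbabilityMeasure μ] {Y : Ω → ℝ} (hY : MemLp Y 2 μ) :
    (∫ ω, Y ω ∂μ) ^ 2 ≤ ∫ ω, Y ω ^ 2 ∂μ := by
  have := variance_nonneg Y μ
  rw [variance_eq_sub hY] at this
  exact sub_nonneg.1 this

end Independence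

section RandomWalk

variable {Ω : Type*} {mΩ : MeasurableSpace Ω} {μ : Measure Ω} {X : ℕ → Ω → ℝ}

lemma memLp_maxPartialSum {p : ℝ≥0∞} (hX : ∀ i, MemLp (X i) p μ) (n : ℕ) :
    MemLp (fun ω ↦ maxPartialSum (X · ω) n) p μ := by
  induction n generalizing X with
  | zero => simpa only [maxPartialSum_zero] using hX 0
  | succ n ih =>
    simp only [maxPartialSum_succ]
    exact (hX 0).add (ih fun i ↦ hX (i + 1)).pos_part

lemma indepFun_maxPartialSum_tail (hindep : iIndepFun X μ) (hX : ∀ i, AEMeasurable (X i) μ)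
    (n : ℕ) : IndepFun (X 0) (fun ω ↦ maxPartialSum (fun i ↦ X (i + 1) ω) n) μ :=
  (indepFun_pi_of_notMem_range hindep hX (g := fun i ↦ i + 1) (by simp)).comp
    measurable_id (measurable_maxPartialSum n)

lemma identDistrib_maxPartialSum_tail (hindep : iIndepFun X μ)
    (hident : ∀ i, IdentDistrib (X i) (X 0) μ μ) (n : ℕ) :
    IdentDistrib (fun ω ↦ maxPartialSum (fun i ↦ X (i + 1) ω) n)
      (fun ω ↦ maxPartialSum (X · ω) n) μ μ :=
  (identDistrib_pi_comp_of_injective hindep hident (add_left_injective 1)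
    Function.injective_id).comp (measurable_maxPartialSum n)

lemma integral_maxPartialSum_succ (hindep : iIndepFun X μ)
    (hident : ∀ i, IdentDistrib (X i) (X 0) μ μ) (hL1 : Integrable (X 0) μ) (n : ℕ) :
    ∫ ω, maxPartialSum (X · ω) (n + 1) ∂μ =
      ∫ ω, X 0 ω ∂μ + ∫ ω, (maxPartialSum (X · ω) n)⁺ ∂μ := by
  have tail := (identDistrib_maxPartialSum_tail hindep hident n).comp
    (u := fun m : ℝ ↦ m⁺) (measurable_id.sup_const 0)
  have tail_integrable : Integrable (fun ω ↦ (maxPartialSum (fun i ↦ X (i + 1) ω) n)⁺) μ :=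
    (memLp_one_iff_integrable.1 <| memLp_maxPartialSum
      (fun i ↦ memLp_one_iff_integrable.2 ((hident (i + 1)).integrable_iff.2 hL1)) n).pos_part
  simp only [maxPartialSum_succ]
  rw [integral_add hL1 tail_integrable]
  exact congrArg _ tail.integral_eq

lemma integral_maxPartialSum_sq_succ (hindep : iIndepFun X μ)
    (hident : ∀ i, IdentDistrib (X i) (X 0) μ μ) (hL2 : MemLp (X 0) 2 μ)
    (hmean : ∫ ω, X 0 ω ∂μ = 0) (n : ℕ) :
    ∫ ω, maxPartialSum (X · ω) (n + 1) ^ 2 ∂μ =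
      ∫ ω, X 0 ω ^ 2 ∂μ + ∫ ω, (maxPartialSum (X · ω) n)⁺ ^ 2 ∂μ := by
  have measurable_posPart : Measurable fun m : ℝ ↦ m⁺ := measurable_id.sup_const 0
  have tail := (identDistrib_maxPartialSum_tail hindep hident n).comp
    (measurable_posPart.pow_const 2)
  have tail_memLp : MemLp (fun ω ↦ (maxPartialSum (fun i ↦ X (i + 1) ω) n)⁺) 2 μ :=
    (memLp_maxPartialSum (fun i ↦ (hident (i + 1)).memLp_iff.2 hL2) n).pos_part
  have indep := (indepFun_maxPartialSum_tail hindep (fun i ↦ (hident i).aemeasurable_fst) n).comp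
    measurable_id measurable_posPart
  simp only [maxPartialSum_succ]
  rw [integral_add_sq_of_indepFun hL2 tail_memLp indep hmean]
  exact congrArg _ tail.integral_eq

lemma integral_maxPartialSum (hindep : iIndepFun X μ)
    (hident : ∀ i, IdentDistrib (X i) (X 0) μ μ) (hL1 : Integrable (X 0) μ)
    (hmean : ∫ ω, X 0 ω ∂μ = 0) (n : ℕ) :
    ∫ ω, maxPartialSum (X · ω) n ∂μ =
      ∑ k ∈ Finset.range n, ∫ ω, (maxPartialSum (X · ω) k)⁻ ∂μ := by
  induction n with
  | zero => simpa only [maxPartialSum_zero, Finset.sum_range_zero] using hmean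
  | succ n ih =>
    have integrable : Integrable (fun ω ↦ maxPartialSum (X · ω) n) μ :=
      memLp_one_iff_integrable.1 <| memLp_maxPartialSum
        (fun i ↦ memLp_one_iff_integrable.2 ((hident i).integrable_iff.2 hL1)) n
    have posPart_eq (m : ℝ) : m⁺ = m + m⁻ := eq_add_of_sub_eq (posPart_sub_negPart m)
    rw [integral_maxPartialSum_succ hindep hident hL1, hmean, zero_add, Finset.sum_range_succ, ← ih]
    simp_rw [posPart_eq]
    exact integral_add integrable integrable.neg_part

lemma integral_posPart_maxPartialSum_sq (hindep : iIndepFun X μ)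
    (hident : ∀ i, IdentDistrib (X i) (X 0) μ μ) (hL2 : MemLp (X 0) 2 μ)
    (hmean : ∫ ω, X 0 ω ∂μ = 0) (n : ℕ) :
    ∫ ω, (maxPartialSum (X · ω) n)⁺ ^ 2 ∂μ = (n + 1) * ∫ ω, X 0 ω ^ 2 ∂μ -
      ∑ k ∈ Finset.range (n + 1), ∫ ω, (maxPartialSum (X · ω) k)⁻ ^ 2 ∂μ := by
  have posPart_sq (m : ℝ) : m⁺ ^ 2 = m ^ 2 - m⁻ ^ 2 := by
    rcases le_total 0 m with hm | hm
    · rw [posPart_of_nonneg hm, negPart_of_nonneg hm]; ring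
    · rw [posPart_of_nonpos hm, negPart_of_nonpos hm]; ring
  have integral_posPart_sq (k : ℕ) : ∫ ω, (maxPartialSum (X · ω) k)⁺ ^ 2 ∂μ =
      ∫ ω, maxPartialSum (X · ω) k ^ 2 ∂μ - ∫ ω, (maxPartialSum (X · ω) k)⁻ ^ 2 ∂μ := by
    have memLp := memLp_maxPartialSum (fun i ↦ (hident i).memLp_iff.2 hL2) k
    simp_rw [posPart_sq]
    exact integral_sub memLp.integrable_sq memLp.neg_part.integrable_sq
  induction n with
  | zero => rw [integral_posPart_sq]; simp [maxPartialSum_zero]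
  | succ n ih =>
    rw [integral_posPart_sq, integral_maxPartialSum_sq_succ hindep hident hL2 hmean, ih,
      Finset.sum_range_succ _ (n + 1)]
    push_cast
    ring

lemma integral_maxPartialSum_sq_le (hindep : iIndepFun X μ)
    (hident : ∀ i, IdentDistrib (X i) (X 0) μ μ) (hL2 : MemLp (X 0) 2 μ)
    (hmean : ∫ ω, X 0 ω ∂μ = 0) (n : ℕ) :
    ∫ ω, maxPartialSum (X · ω) n ^ 2 ∂μ ≤ (n + 1) * ∫ ω, X 0 ω ^ 2 ∂μ := by
  cases n with
  | zero => simp [maxPartialSum_zero]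
  | succ n =>
    have sum_nonneg : 0 ≤ ∑ k ∈ Finset.range (n + 1), ∫ ω, (maxPartialSum (X · ω) k)⁻ ^ 2 ∂μ := by
      positivity
    rw [integral_maxPartialSum_sq_succ hindep hident hL2 hmean,
      integral_posPart_maxPartialSum_sq hindep hident hL2 hmean]
    push_cast
    linarith

lemma sq_mul_integral_negPart_maxPartialSum_le (hindep : iIndepFun X μ)
    (hident : ∀ i, IdentDistrib (X i) (X 0) μ μ) (hL2 : MemLp (X 0) 2 μ)
    (hmean : ∫ ω, X 0 ω ∂μ = 0) (n : ℕ) :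
    (n * ∫ ω, (maxPartialSum (X · ω) n)⁻ ∂μ) ^ 2 ≤ (n + 1) * ∫ ω, X 0 ω ^ 2 ∂μ := by
  have := hindep.isProbabilityMeasure
  have memLp := memLp_maxPartialSum fun i ↦ (hident i).memLp_iff.2 hL2
  have integrable (k : ℕ) : Integrable (fun ω ↦ (maxPartialSum (X · ω) k)⁻) μ :=
    ((memLp k).integrable one_le_two).neg_part
  have mul_le_integral : n * ∫ ω, (maxPartialSum (X · ω) n)⁻ ∂μ ≤
      ∫ ω, maxPartialSum (X · ω) n ∂μ := by
    rw [integral_maxPartialSum hindep hident (hL2.integrable one_le_two) hmean, ← nsmul_eq_mul]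
    simpa only [Finset.card_range] using Finset.card_nsmul_le_sum (Finset.range n) _ _ fun k hk ↦
      integral_mono (integrable n) (integrable k) fun ω ↦
        negPart_maxPartialSum_antitone (X · ω) (Finset.mem_range.1 hk).le
  calc (n * ∫ ω, (maxPartialSum (X · ω) n)⁻ ∂μ) ^ 2
      ≤ (∫ ω, maxPartialSum (X · ω) n ∂μ) ^ 2 := by gcongr
    _ ≤ ∫ ω, maxPartialSum (X · ω) n ^ 2 ∂μ := sq_integral_le_integral_sq (memLp n)
    _ ≤ (n + 1) * ∫ ω, X 0 ω ^ 2 ∂μ := integral_maxPartialSum_sq_le hindep hident hL2 hmean n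

lemma tendsto_integral_negPart_maxPartialSum (hindep : iIndepFun X μ)
    (hident : ∀ i, IdentDistrib (X i) (X 0) μ μ) (hL2 : MemLp (X 0) 2 μ)
    (hmean : ∫ ω, X 0 ω ∂μ = 0) :
    Tendsto (fun n ↦ ∫ ω, (maxPartialSum (X · ω) n)⁻ ∂μ) atTop (nhds 0) := by
  set v := ∫ ω, X 0 ω ^ 2 ∂μ
  have inv_tendsto : Tendsto (fun n : ℕ ↦ (n : ℝ)⁻¹) atTop (nhds 0) :=
    tendsto_inv_atTop_nhds_zero_nat
  have bound_tendsto : Tendsto (fun n : ℕ ↦ ((n : ℝ)⁻¹ + (n : ℝ)⁻¹ ^ 2) * v) atTop (nhds 0) := by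
    simpa using (inv_tendsto.add (inv_tendsto.pow 2)).mul_const v
  have sq_tendsto :
      Tendsto (fun n ↦ (∫ ω, (maxPartialSum (X · ω) n)⁻ ∂μ) ^ 2) atTop (nhds 0) := by
    refine squeeze_zero' (.of_forall fun n ↦ sq_nonneg _) ?_ bound_tendsto
    filter_upwards [eventually_gt_atTop 0] with n hn
    have sq_mul_le := sq_mul_integral_negPart_maxPartialSum_le hindep hident hL2 hmean n
    have : (0 : ℝ) < n := by exact_mod_cast hn
    calc (∫ ω, (maxPartialSum (X · ω) n)⁻ ∂μ) ^ 2 ≤ (n + 1) * v / n ^ 2 := by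
          rwa [le_div_iff₀' (by positivity), ← mul_pow]
      _ = ((n : ℝ)⁻¹ + (n : ℝ)⁻¹ ^ 2) * v := by field_simp
  rw [tendsto_zero_iff_abs_tendsto_zero]
  simpa only [Function.comp_def, Real.sqrt_sq_eq_abs, Real.sqrt_zero] using sq_tendsto.sqrt

lemma ae_tendsto_negPart_maxPartialSum (hindep : iIndepFun X μ)
    (hident : ∀ i, IdentDistrib (X i) (X 0) μ μ) (hL2 : MemLp (X 0) 2 μ)
    (hmean : ∫ ω, X 0 ω ∂μ = 0) :
    ∀ᵐ ω ∂μ, Tendsto (fun n ↦ (maxPartialSum (X · ω) n)⁻) atTop (nhds 0) := by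
  have := hindep.isProbabilityMeasure
  refine tendsto_of_integral_tendsto_of_antitone (F := fun _ ↦ 0) (fun n ↦ ?_)
    (integrable_zero Ω ℝ μ) ?_ (.of_forall fun ω ↦ negPart_maxPartialSum_antitone _)
    (.of_forall fun ω n ↦ negPart_nonneg _)
  · exact ((memLp_maxPartialSum (fun i ↦ (hident i).memLp_iff.2 hL2) n).integrable
      one_le_two).neg_part
  · simpa only [integral_zero] using
      tendsto_integral_negPart_maxPartialSum hindep hident hL2 hmean

lemma tendsto_integral_negPart_maxPartialSum_sq (hindep : iIndepFun X μ)
    (hident : ∀ i, IdentDistrib (X i) (X 0) μ μ) (hL2 : MemLp (X 0) 2 μ)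
    (hmean : ∫ ω, X 0 ω ∂μ = 0) :
    Tendsto (fun n ↦ ∫ ω, (maxPartialSum (X · ω) n)⁻ ^ 2 ∂μ) atTop (nhds 0) := by
  rw [← integral_zero Ω ℝ (μ := μ)]
  refine tendsto_integral_of_dominated_convergence (fun ω ↦ (X 0 ω)⁻ ^ 2) (fun n ↦ ?_)
    hL2.neg_part.integrable_sq (fun n ↦ .of_forall fun ω ↦ ?_) ?_
  · exact (memLp_maxPartialSum (fun i ↦ (hident i).memLp_iff.2 hL2) n).neg_part.1.pow 2
  · rw [Real.norm_of_nonneg (sq_nonneg _)]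
    exact pow_le_pow_left₀ (negPart_nonneg _) (negPart_maxPartialSum_le (X · ω) n) 2
  · filter_upwards [ae_tendsto_negPart_maxPartialSum hindep hident hL2 hmean] with ω hω
    simpa using hω.pow 2

lemma tendsto_integral_posPart_maxPartialSum_sq_div (hindep : iIndepFun X μ)
    (hident : ∀ i, IdentDistrib (X i) (X 0) μ μ) (hL2 : MemLp (X 0) 2 μ)
    (hmean : ∫ ω, X 0 ω ∂μ = 0) :
    Tendsto (fun n : ℕ ↦ (∫ ω, (maxPartialSum (X · ω) n)⁺ ^ 2 ∂μ) / (n + 1 : ℕ)) atTop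
      (nhds (∫ ω, X 0 ω ^ 2 ∂μ)) := by
  have cesaro := (tendsto_add_atTop_iff_nat 1).2
    (tendsto_integral_negPart_maxPartialSum_sq hindep hident hL2 hmean).cesaro
  rw [← sub_zero (∫ ω, X 0 ω ^ 2 ∂μ)]
  refine (tendsto_const_nhds.sub cesaro).congr fun n ↦ ?_
  rw [integral_posPart_maxPartialSum_sq hindep hident hL2 hmean]
  push_cast
  field_simp

end RandomWalk

theorem stmt17_general {Ω : Type*} {mΩ : MeasurableSpace Ω} {μ : Measure Ω}
    (X : ℕ → Ω → ℝ) (hindep : iIndepFun X μ) (hident : ∀ i, IdentDistrib (X i) (X 0) μ μ)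
    (hL2 : MemLp (X 0) 2 μ) (hmean : ∫ ω, X 0 ω ∂μ = 0)
    (Sbar : ℕ → Ω → ℝ)
    (hSbar : ∀ n, ∀ hn : 1 ≤ n, ∀ ω, Sbar n ω =
      (Finset.Icc 1 n).sup' (Finset.nonempty_Icc.mpr hn)
        (fun k => ∑ i ∈ Finset.range k, X i ω)) :
    Tendsto (fun n => (∫ ω, (max (Sbar n ω) 0) ^ 2 ∂μ) / n) atTop
      (nhds (∫ ω, (X 0 ω) ^ 2 ∂μ)) := by
  have Sbar_succ (n : ℕ) (ω : Ω) : Sbar (n + 1) ω = maxPartialSum (X · ω) n :=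
    (hSbar (n + 1) n.succ_pos ω).trans (sup'_Icc_sum_range_eq_maxPartialSum (X · ω) n _)
  rw [← tendsto_add_atTop_iff_nat 1]
  simp only [Sbar_succ]
  exact tendsto_integral_posPart_maxPartialSum_sq_div hindep hident hL2 hmean

/-- For i.i.d. summands with mean `0` and variance `1`: `E[(S̄ₙ⁺)²]/n → 1`. -/
theorem stmt17 {Ω : Type*} [MeasureSpace Ω] [IsProbabilityMeasure (ℙ : Measure Ω)]
    (X : ℕ → Ω → ℝ) (hmeas : ∀ i, Measurable (X i))
    (hindep : iIndepFun X ℙ)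
    (hident : ∀ i, Measure.map (X i) ℙ = Measure.map (X 0) ℙ)
    (hL2 : MemLp (X 0) 2 ℙ)
    (hmean : ∫ ω, X 0 ω ∂ℙ = 0)
    (hvar : ∫ ω, (X 0 ω) ^ 2 ∂ℙ = 1)
    (Sbar : ℕ → Ω → ℝ)
    (hSbar : ∀ n, ∀ hn : 1 ≤ n, ∀ ω, Sbar n ω =
      (Finset.Icc 1 n).sup' (Finset.nonempty_Icc.mpr hn)
        (fun k => ∑ i ∈ Finset.range k, X i ω)) :
    Tendsto (fun n => (∫ ω, (max (Sbar n ω) 0) ^ 2 ∂ℙ) / n) atTop (nhds 1) :=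
  hvar ▸ stmt17_general X hindep
    (fun i ↦ ⟨(hmeas i).aemeasurable, (hmeas 0).aemeasurable, hident i⟩) hL2 hmean Sbar hSbar
end

section
/- Let X₁, X₂, … be i.i.d. real random variables with mean 0 and variance 1, S̄_n := max_{1≤k≤n} (X₁+…+X_k), and x⁺ := max(x,0). Then the family of random variables { (S̄_n⁺/√n)² : n ∈ ℕ } is uniformly integrable, i.e. for every ε > 0 there exists K > 0 such that E[(S̄_n⁺/√n)² · 1_{(S̄_n⁺/√n)² > K}] ≤ ε for all n ∈ ℕ. -/
open MeasureTheory ProbabilityTheory Filter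
open scoped ENNReal

/-!
Doob's `L²` inequality, applied to the submartingale `(Sₙ - c)⁺`, bounds the tail second moment
`E[Mₙ²; Mₙ > 2c]` of the running maximum `Mₙ = max (S̄ₙ, 0)` by `16 E[((Sₙ - c)⁺)²]`, so only the
endpoint `Sₙ` has to be controlled. Truncating the increments and recentring them conditionally
splits the martingale as `S = Y + Z`, where `Y` has bounded increments, so that `E[Yₙ⁴] ≤ C n²`,
and `E[Zₙ²] ≤ n δ` with `δ` as small as we please. Since `((y + z - c)⁺)² ≤ y⁴ / (8c²) + 2z²`, the
choice `c = L √n` with `L` large makes `E[((Sₙ - L √n)⁺)²] / n` uniformly small.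
-/

lemma max_sup'_Icc_eq_partialSups {α : Type*} [Lattice α] (s : ℕ → α) {n : ℕ} (hn : 1 ≤ n) :
    (Finset.Icc 1 n).sup' (Finset.nonempty_Icc.mpr hn) s ⊔ s 0 = partialSups s n := by
  refine eq_of_forall_ge_iff fun c ↦ ?_
  simp only [sup_le_iff, Finset.sup'_le_iff, Finset.mem_Icc, partialSups_le_iff]
  refine ⟨fun h k hk ↦ ?_, fun h ↦ ⟨fun k hk ↦ h k hk.2, h 0 n.zero_le⟩⟩
  rcases k.eq_zero_or_pos with rfl | hk₀
  exacts [h.2, h.1 k ⟨hk₀, hk⟩]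

-- The running maximum `M` only moves at times when `s = M`. Summation by parts therefore makes
-- `2 M s` dominate `M ^ 2 + 2 ∑ M Δs`, and completing the square turns `2 M s` into `4 s ^ 2`.
lemma sq_partialSups_le (s : ℕ → ℝ) (n : ℕ) :
    partialSups s n ^ 2 ≤
      4 * s n ^ 2 - 4 * ∑ k ∈ Finset.range n, partialSups s k * (s (k + 1) - s k) := by
  have by_parts :
      partialSups s n ^ 2 + 2 * ∑ k ∈ Finset.range n, partialSups s k * (s (k + 1) - s k) ≤
        2 * partialSups s n * s n := by
    induction n with
    | zero => simp only [partialSups_zero, Finset.range_zero, Finset.sum_empty]; nlinarith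
    | succ n ih =>
      rw [Finset.sum_range_succ, partialSups_add_one]
      rcases le_total (s (n + 1)) (partialSups s n) with h | h
      · rw [sup_eq_left.mpr h]; nlinarith
      · rw [sup_eq_right.mpr h]; nlinarith [sq_nonneg (s (n + 1) - partialSups s n)]
  nlinarith [sq_nonneg (partialSups s n - 2 * s n)]

lemma sq_le_four_mul_sq_posPart_sub {x c : ℝ} (hc : 0 ≤ c) (hx : 2 * c ≤ x) :
    x ^ 2 ≤ 4 * (x - c)⁺ ^ 2 := by
  rw [posPart_eq_self.mpr (by linarith)]; nlinarith

lemma sq_posPart_add_sub_le (y z : ℝ) {c : ℝ} (hc : 0 < c) :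
    (y + z - c)⁺ ^ 2 ≤ y ^ 4 / (8 * c ^ 2) + 2 * z ^ 2 := by
  have amgm : y - c ≤ y ^ 2 / (4 * c) := by
    rw [le_div_iff₀ (by positivity)]; nlinarith [sq_nonneg (y - 2 * c)]
  have hle : (y + z - c)⁺ ≤ y ^ 2 / (4 * c) + |z| :=
    max_le (by linarith [le_abs_self z]) (by positivity)
  calc (y + z - c)⁺ ^ 2 ≤ (y ^ 2 / (4 * c) + |z|) ^ 2 := by gcongr
    _ ≤ 2 * ((y ^ 2 / (4 * c)) ^ 2 + |z| ^ 2) := add_sq_le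
    _ = y ^ 4 / (8 * c ^ 2) + 2 * z ^ 2 := by rw [sq_abs]; field_simp; ring

lemma pow_four_add_le {B x d : ℝ} (hd : |d| ≤ B) :
    (x + d) ^ 4 ≤ x ^ 4 + 4 * (x ^ 3 * d) + 8 * B ^ 2 * x ^ 2 + 3 * B ^ 4 := by
  have hd2 : d ^ 2 ≤ B ^ 2 := sq_le_sq.mpr (hd.trans (le_abs_self B))
  have hd4 : d ^ 4 ≤ B ^ 4 := by nlinarith
  nlinarith [sq_nonneg (x * d - d ^ 2), mul_le_mul_of_nonneg_left hd2 (sq_nonneg x)]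

lemma abs_le_mul_of_abs_sub_le {s : ℕ → ℝ} (hs₀ : s 0 = 0) {B : ℝ}
    (hs : ∀ n, |s (n + 1) - s n| ≤ B) (n : ℕ) : |s n| ≤ n * B := by
  have := dist_le_range_sum_of_dist_le (f := s) n fun {k} _ ↦ (dist_comm _ _).trans_le (hs k)
  simpa [hs₀, Real.dist_eq] using this

section

variable {Ω : Type*} {mΩ : MeasurableSpace Ω} {μ : Measure Ω} {ℱ : Filtration ℕ mΩ} {f : ℕ → Ω → ℝ}

lemma memLp_of_memLp_sub {p : ℝ≥0∞} (hf₀ : f 0 = 0)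
    (hL : ∀ n, MemLp (f (n + 1) - f n) p μ) (n : ℕ) : MemLp (f n) p μ := by
  rw [← sub_zero (f n), ← hf₀, ← Finset.sum_range_sub]
  exact memLp_finsetSum' _ fun i _ ↦ hL i

lemma memLp_partialSups {p : ℝ≥0∞} (hf : ∀ n, MemLp (f n) p μ) (n : ℕ) :
    MemLp (partialSups f n) p μ := by
  induction n with
  | zero => simpa only [partialSups_zero] using hf 0
  | succ n ih => rw [partialSups_add_one]; exact ih.sup (hf (n + 1))

lemma stronglyAdapted_partialSups (hf : StronglyAdapted ℱ f) :
    StronglyAdapted ℱ (partialSups f) := by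
  intro n
  induction n with
  | zero => simpa only [partialSups_zero] using hf 0
  | succ n ih =>
    rw [partialSups_add_one]
    exact @StronglyMeasurable.sup _ _ _ _ (ℱ (n + 1)) _ _ _ (ih.mono (ℱ.mono n.le_succ))
      (hf (n + 1))

lemma integral_sq_posPart_add_sub_le {Y Z : Ω → ℝ} (hY : Integrable (fun ω ↦ Y ω ^ 4) μ)
    (hZ : Integrable (fun ω ↦ Z ω ^ 2) μ) {c : ℝ} (hc : 0 < c) :
    ∫ ω, (Y ω + Z ω - c)⁺ ^ 2 ∂μ ≤ (∫ ω, Y ω ^ 4 ∂μ) / (8 * c ^ 2) + 2 * ∫ ω, Z ω ^ 2 ∂μ :=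
  calc ∫ ω, (Y ω + Z ω - c)⁺ ^ 2 ∂μ ≤ ∫ ω, (Y ω ^ 4 / (8 * c ^ 2) + 2 * Z ω ^ 2) ∂μ :=
        integral_mono_of_nonneg (ae_of_all _ fun ω ↦ by positivity) (by fun_prop)
          (ae_of_all _ fun ω ↦ sq_posPart_add_sub_le (Y ω) (Z ω) hc)
    _ = (∫ ω, Y ω ^ 4 ∂μ) / (8 * c ^ 2) + 2 * ∫ ω, Z ω ^ 2 ∂μ := by
        rw [integral_add (by fun_prop) (by fun_prop), integral_div, integral_const_mul]

lemma integral_sq_le_of_eLpNorm_two_le {g : Ω → ℝ} (hg : AEStronglyMeasurable g μ) {δ : ℝ}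
    (hδ : 0 ≤ δ) (h : eLpNorm g 2 μ ≤ ENNReal.ofReal √δ) : ∫ ω, g ω ^ 2 ∂μ ≤ δ := by
  have hnorm : lpNorm g 2 μ ≤ √δ :=
    toReal_eLpNorm hg ▸ ENNReal.toReal_le_of_le_ofReal (Real.sqrt_nonneg δ) h
  rw [lpNorm_eq_integral_norm_rpow_toReal two_ne_zero ENNReal.ofNat_ne_top hg] at hnorm
  simpa [← one_div, ← Real.sqrt_eq_rpow, Real.sqrt_le_sqrt_iff hδ] using hnorm

lemma abs_sub_truncation_le {α : Type*} (g : α → ℝ) (A : ℝ) (x : α) :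
    |g x - truncation g A x| ≤ |{y | A ≤ |g y|}.indicator g x| := by
  by_cases hx : |g x| < A
  · simp only [truncation_eq_self hx, sub_self, abs_zero, abs_nonneg]
  · rw [Set.indicator_of_mem (by exact not_lt.mp hx)]
    by_cases hmem : g x ∈ Set.Ioc (-A) A <;> simp [truncation, hmem]

lemma exists_integral_sub_truncation_sq_le {ι : Type*} {X : ι → Ω → ℝ}
    (hX : UniformIntegrable X 2 μ) {δ : ℝ} (hδ : 0 < δ) :
    ∃ A, ∀ i, ∫ ω, (X i ω - truncation (X i) A ω) ^ 2 ∂μ ≤ δ := by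
  obtain ⟨C, hC⟩ := hX.spec two_ne_zero ENNReal.ofNat_ne_top (Real.sqrt_pos.mpr hδ)
  refine ⟨C, fun i ↦ integral_sq_le_of_eLpNorm_two_le ((hX.1 i).sub (hX.1 i).truncation) hδ.le ?_⟩
  exact (eLpNorm_mono fun ω ↦ abs_sub_truncation_le (X i) C ω).trans (hC i)

lemma martingalePart_add_one_sub (g : ℕ → Ω → ℝ) (n : ℕ) :
    martingalePart g ℱ μ (n + 1) - martingalePart g ℱ μ n =
      g (n + 1) - g n - μ[g (n + 1) - g n | ℱ n] := by
  simp only [martingalePart, predictablePart_add_one]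
  abel

lemma memLp_martingalePart {p : ℝ≥0∞} (hp : 1 ≤ p) (hL : ∀ n, MemLp (f n) p μ) (n : ℕ) :
    MemLp (martingalePart f ℱ μ n) p μ :=
  (hL n).sub <| memLp_finsetSum' _ fun i _ ↦ ((hL (i + 1)).sub (hL i)).condExp hp

/-- The process with the increments of `f` truncated at level `A`, started at `0`. Recentred, it is
the part of `f` with bounded increments; it need not be a martingale even if `f` is one. -/
noncomputable def truncatedIncrementSum (f : ℕ → Ω → ℝ) (A : ℝ) (n : ℕ) : Ω → ℝ :=
  ∑ i ∈ Finset.range n, truncation (f (i + 1) - f i) A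

lemma truncatedIncrementSum_zero (f : ℕ → Ω → ℝ) (A : ℝ) : truncatedIncrementSum f A 0 = 0 :=
  rfl

lemma truncatedIncrementSum_add_one_sub (f : ℕ → Ω → ℝ) (A : ℝ) (n : ℕ) :
    truncatedIncrementSum f A (n + 1) - truncatedIncrementSum f A n =
      truncation (f (n + 1) - f n) A :=
  Finset.sum_range_succ_sub_sum _

lemma abs_truncatedIncrementSum_sub_le (f : ℕ → Ω → ℝ) (A : ℝ) (ω : Ω) (n : ℕ) :
    |truncatedIncrementSum f A (n + 1) ω - truncatedIncrementSum f A n ω| ≤ |A| := by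
  rw [← Pi.sub_apply, truncatedIncrementSum_add_one_sub]
  exact abs_truncation_le_bound _ _ _

lemma stronglyAdapted_truncatedIncrementSum (hf : StronglyAdapted ℱ f) (A : ℝ) :
    StronglyAdapted ℱ (truncatedIncrementSum f A) := fun n ↦
  Finset.stronglyMeasurable_sum _ fun i hi ↦ by
    have hi : i + 1 ≤ n := Finset.mem_range.mp hi
    have hincr : StronglyMeasurable[ℱ n] (f (i + 1) - f i) :=
      (hf.stronglyMeasurable_le hi).sub (hf.stronglyMeasurable_le (i.le_succ.trans hi))
    exact ((measurable_id.indicator measurableSet_Ioc).comp hincr.measurable).stronglyMeasurable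

variable [IsFiniteMeasure μ]

lemma integral_mul_condExp_eq {m : MeasurableSpace Ω} (hm : m ≤ mΩ) {g h : Ω → ℝ}
    (hg : StronglyMeasurable[m] g) (hh : Integrable h μ) (hgh : Integrable (fun ω ↦ g ω * h ω) μ) :
    ∫ ω, g ω * h ω ∂μ = ∫ ω, g ω * (μ[h | m]) ω ∂μ := by
  rw [← integral_condExp hm]
  exact integral_congr_ae (condExp_mul_of_stronglyMeasurable_left hg hgh hh)

lemma integral_mul_sub_nonneg (hf : Submartingale f ℱ μ) {i j : ℕ} (hij : i ≤ j) {g : Ω → ℝ}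
    (hg : StronglyMeasurable[ℱ i] g) (hg₀ : 0 ≤ g)
    (hint : Integrable (fun ω ↦ g ω * (f j ω - f i ω)) μ) :
    0 ≤ ∫ ω, g ω * (f j ω - f i ω) ∂μ :=
  calc 0 ≤ ∫ ω, g ω * (μ[f j - f i | ℱ i]) ω ∂μ := integral_nonneg_of_ae <| by
        filter_upwards [hf.condExp_sub_nonneg hij] with ω hω using mul_nonneg (hg₀ ω) hω
    _ = ∫ ω, g ω * (f j ω - f i ω) ∂μ := (integral_mul_condExp_eq (ℱ.le i) hg
        ((hf.integrable j).sub (hf.integrable i)) hint).symm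

lemma integral_mul_sub_eq_zero (hf : Martingale f ℱ μ) {i j : ℕ} (hij : i ≤ j) {g : Ω → ℝ}
    (hg : StronglyMeasurable[ℱ i] g) (hint : Integrable (fun ω ↦ g ω * (f j ω - f i ω)) μ) :
    ∫ ω, g ω * (f j ω - f i ω) ∂μ = 0 := by
  have hzero : μ[f j - f i | ℱ i] =ᵐ[μ] 0 := by
    filter_upwards [condExp_sub (hf.integrable j) (hf.integrable i) (ℱ i),
      hf.condExp_ae_eq hij, hf.condExp_ae_eq le_rfl] with ω hsub hj hi
    rw [hsub, Pi.sub_apply, hj, hi, sub_self, Pi.zero_apply]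
  calc ∫ ω, g ω * (f j ω - f i ω) ∂μ = ∫ ω, g ω * (μ[f j - f i | ℱ i]) ω ∂μ :=
        integral_mul_condExp_eq (ℱ.le i) hg ((hf.integrable j).sub (hf.integrable i)) hint
    _ = 0 := integral_eq_zero_of_ae <| by
        filter_upwards [hzero] with ω hω
        rw [hω, Pi.zero_apply, mul_zero]

/-! ### Doob's maximal inequality -/

theorem integral_sq_partialSups_le (hf : Submartingale f ℱ μ) (hf₀ : 0 ≤ f)
    (hL2 : ∀ n, MemLp (f n) 2 μ) (n : ℕ) :
    ∫ ω, partialSups f n ω ^ 2 ∂μ ≤ 4 * ∫ ω, f n ω ^ 2 ∂μ := by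
  have hM := memLp_partialSups hL2
  have hM₀ (k : ℕ) : 0 ≤ partialSups f k := (hf₀ k).trans (le_partialSups f k)
  have hint (k : ℕ) : Integrable (fun ω ↦ partialSups f k ω * (f (k + 1) ω - f k ω)) μ :=
    (hM k).integrable_mul ((hL2 (k + 1)).sub (hL2 k))
  have htransform : 0 ≤ ∑ k ∈ Finset.range n,
      ∫ ω, partialSups f k ω * (f (k + 1) ω - f k ω) ∂μ :=
    Finset.sum_nonneg fun k _ ↦ integral_mul_sub_nonneg hf k.le_succ
      (stronglyAdapted_partialSups hf.stronglyAdapted k) (hM₀ k) (hint k)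
  calc ∫ ω, partialSups f n ω ^ 2 ∂μ
      ≤ ∫ ω, (4 * f n ω ^ 2 - 4 * ∑ k ∈ Finset.range n,
          partialSups f k ω * (f (k + 1) ω - f k ω)) ∂μ :=
        integral_mono (hM n).integrable_sq (((hL2 n).integrable_sq.const_mul 4).sub
          ((integrable_finsetSum _ fun k _ ↦ hint k).const_mul 4)) fun ω ↦ by
            simpa only [Pi.partialSups_apply] using sq_partialSups_le (f · ω) n
    _ = 4 * ∫ ω, f n ω ^ 2 ∂μ - 4 * ∑ k ∈ Finset.range n,
          ∫ ω, partialSups f k ω * (f (k + 1) ω - f k ω) ∂μ := by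
        rw [integral_sub ((hL2 n).integrable_sq.const_mul 4)
          ((integrable_finsetSum _ fun k _ ↦ hint k).const_mul 4), integral_const_mul,
          integral_const_mul, integral_finsetSum _ fun k _ ↦ hint k]
    _ ≤ 4 * ∫ ω, f n ω ^ 2 ∂μ := by linarith

theorem setIntegral_sq_partialSups_le (hf : Submartingale f ℱ μ) (hL2 : ∀ n, MemLp (f n) 2 μ)
    {c : ℝ} (hc : 0 ≤ c) (n : ℕ) :
    ∫ ω in {ω | 2 * c < partialSups f n ω}, partialSups f n ω ^ 2 ∂μ ≤
      16 * ∫ ω, (f n ω - c)⁺ ^ 2 ∂μ := by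
  let g : ℕ → Ω → ℝ := fun k ω ↦ (f k ω - c)⁺
  have hg : Submartingale g ℱ μ := (hf.sub_martingale (martingale_const ℱ μ c)).pos
  have hgL2 (k : ℕ) : MemLp (g k) 2 μ := ((hL2 k).sub (memLp_const c)).pos_part
  have hM := memLp_partialSups hL2 n
  have hpart (ω : Ω) : (partialSups f n ω - c)⁺ ≤ partialSups g n ω := by
    obtain ⟨k, hk, hmax⟩ := exists_partialSups_eq (f · ω) n
    rw [Pi.partialSups_apply, hmax]
    exact le_partialSups_of_le g hk ω
  have hA : NullMeasurableSet {ω | 2 * c < partialSups f n ω} μ :=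
    nullMeasurableSet_lt aemeasurable_const hM.aestronglyMeasurable.aemeasurable
  have hsq : Integrable (fun ω ↦ 4 * partialSups g n ω ^ 2) μ :=
    (memLp_partialSups hgL2 n).integrable_sq.const_mul 4
  calc ∫ ω in {ω | 2 * c < partialSups f n ω}, partialSups f n ω ^ 2 ∂μ
      ≤ ∫ ω in {ω | 2 * c < partialSups f n ω}, 4 * partialSups g n ω ^ 2 ∂μ := by
        refine integral_mono_ae hM.integrable_sq.integrableOn hsq.integrableOn ?_
        filter_upwards [ae_restrict_mem₀ hA] with ω hω
        refine (sq_le_four_mul_sq_posPart_sub hc (le_of_lt hω)).trans ?_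
        gcongr
        exact hpart ω
    _ ≤ ∫ ω, 4 * partialSups g n ω ^ 2 ∂μ :=
        setIntegral_le_integral hsq (ae_of_all _ fun ω ↦ by positivity)
    _ ≤ 16 * ∫ ω, (f n ω - c)⁺ ^ 2 ∂μ := by
        rw [integral_const_mul]
        linarith [integral_sq_partialSups_le hg (fun k ω ↦ posPart_nonneg _) hgL2 n]

/-! ### Moments of martingales and of martingale parts -/

lemma integral_sq_eq_add_integral_sub_sq (hf : Martingale f ℱ μ) (hL2 : ∀ n, MemLp (f n) 2 μ)
    {i j : ℕ} (hij : i ≤ j) :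
    ∫ ω, f j ω ^ 2 ∂μ = ∫ ω, f i ω ^ 2 ∂μ + ∫ ω, (f j ω - f i ω) ^ 2 ∂μ := by
  have hcross : Integrable (fun ω ↦ f i ω * (f j ω - f i ω)) μ :=
    (hL2 i).integrable_mul ((hL2 j).sub (hL2 i))
  have hsq : Integrable (fun ω ↦ f i ω ^ 2) μ := (hL2 i).integrable_sq
  have hdiff : Integrable (fun ω ↦ (f j ω - f i ω) ^ 2) μ := ((hL2 j).sub (hL2 i)).integrable_sq
  calc ∫ ω, f j ω ^ 2 ∂μ
      = ∫ ω, (f i ω ^ 2 + 2 * (f i ω * (f j ω - f i ω)) + (f j ω - f i ω) ^ 2) ∂μ := by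
        congr with ω; ring
    _ = ∫ ω, f i ω ^ 2 ∂μ + ∫ ω, (f j ω - f i ω) ^ 2 ∂μ := by
        rw [integral_add (by fun_prop) hdiff, integral_add hsq (by fun_prop), integral_const_mul,
          integral_mul_sub_eq_zero hf hij (hf.stronglyMeasurable i) hcross, mul_zero, add_zero]

lemma integral_sq_le_of_integral_sub_sq_le (hf : Martingale f ℱ μ) (hL2 : ∀ n, MemLp (f n) 2 μ)
    (hf₀ : f 0 = 0) {v : ℝ} (hv : ∀ n, ∫ ω, (f (n + 1) ω - f n ω) ^ 2 ∂μ ≤ v) (n : ℕ) :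
    ∫ ω, f n ω ^ 2 ∂μ ≤ n * v := by
  induction n with
  | zero => simp [hf₀]
  | succ n ih =>
    rw [integral_sq_eq_add_integral_sub_sq hf hL2 n.le_succ]
    push_cast
    linarith [hv n]

variable {B : ℝ}

lemma memLp_pow_of_abs_sub_le (hf : ∀ n, AEStronglyMeasurable (f n) μ) (hf₀ : f 0 = 0)
    (hB : ∀ᵐ ω ∂μ, ∀ n, |f (n + 1) ω - f n ω| ≤ B) (p : ℝ≥0∞) (k n : ℕ) :
    MemLp (fun ω ↦ f n ω ^ k) p μ :=
  .of_bound ((hf n).pow k) ((n * B) ^ k) <| by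
    filter_upwards [hB] with ω hω
    rw [norm_pow, Real.norm_eq_abs]
    gcongr
    exact abs_le_mul_of_abs_sub_le (s := (f · ω)) (congrFun hf₀ ω) hω n

lemma memLp_of_abs_sub_le (hf : ∀ n, AEStronglyMeasurable (f n) μ) (hf₀ : f 0 = 0)
    (hB : ∀ᵐ ω ∂μ, ∀ n, |f (n + 1) ω - f n ω| ≤ B) (p : ℝ≥0∞) (n : ℕ) : MemLp (f n) p μ := by
  simpa only [pow_one] using memLp_pow_of_abs_sub_le hf hf₀ hB p 1 n

lemma integral_sq_le_of_abs_sub_le (hf : Martingale f ℱ μ) (hf₀ : f 0 = 0)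
    (hB : ∀ᵐ ω ∂μ, ∀ n, |f (n + 1) ω - f n ω| ≤ B) (n : ℕ) :
    ∫ ω, f n ω ^ 2 ∂μ ≤ n * (μ.real Set.univ * B ^ 2) := by
  have hL2 := memLp_of_abs_sub_le (fun n ↦ (hf.integrable n).1) hf₀ hB 2
  refine integral_sq_le_of_integral_sub_sq_le hf hL2 hf₀ (fun k ↦ ?_) n
  have hle : (fun ω ↦ (f (k + 1) ω - f k ω) ^ 2) ≤ᵐ[μ] fun _ ↦ B ^ 2 := by
    filter_upwards [hB] with ω hω using sq_le_sq.mpr ((hω k).trans (le_abs_self B))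
  simpa using integral_mono_ae ((hL2 (k + 1)).sub (hL2 k)).integrable_sq (integrable_const _) hle

lemma integral_pow_four_le_of_abs_sub_le (hf : Martingale f ℱ μ) (hf₀ : f 0 = 0)
    (hB : ∀ᵐ ω ∂μ, ∀ n, |f (n + 1) ω - f n ω| ≤ B) (n : ℕ) :
    ∫ ω, f n ω ^ 4 ∂μ ≤ 4 * B ^ 4 * n ^ 2 * μ.real Set.univ := by
  have hpow := memLp_pow_of_abs_sub_le (fun n ↦ (hf.integrable n).1) hf₀ hB
  have hL2 := memLp_of_abs_sub_le (fun n ↦ (hf.integrable n).1) hf₀ hB 2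
  induction n with
  | zero => simp [hf₀]
  | succ n ih =>
    have h2 : Integrable (fun ω ↦ f n ω ^ 2) μ := (hL2 n).integrable_sq
    have h4 (k : ℕ) : Integrable (fun ω ↦ f k ω ^ 4) μ := (hpow 1 4 k).integrable le_rfl
    have hcross : Integrable (fun ω ↦ f n ω ^ 3 * (f (n + 1) ω - f n ω)) μ :=
      (hpow 2 3 n).integrable_mul ((hL2 (n + 1)).sub (hL2 n))
    have hcross₀ : ∫ ω, f n ω ^ 3 * (f (n + 1) ω - f n ω) ∂μ = 0 :=
      integral_mul_sub_eq_zero hf n.le_succ ((hf.stronglyMeasurable n).pow 3) hcross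
    calc ∫ ω, f (n + 1) ω ^ 4 ∂μ
        ≤ ∫ ω, (f n ω ^ 4 + 4 * (f n ω ^ 3 * (f (n + 1) ω - f n ω)) + 8 * B ^ 2 * f n ω ^ 2
            + 3 * B ^ 4) ∂μ := by
          refine integral_mono_ae (h4 (n + 1)) (by fun_prop) ?_
          filter_upwards [hB] with ω hω
          simpa only [add_sub_cancel] using pow_four_add_le (x := f n ω) (hω n)
      _ = ∫ ω, f n ω ^ 4 ∂μ + 8 * B ^ 2 * ∫ ω, f n ω ^ 2 ∂μ + μ.real Set.univ * (3 * B ^ 4) := by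
          rw [integral_add (by fun_prop) (by fun_prop), integral_add (by fun_prop) (by fun_prop),
            integral_add (by fun_prop) (by fun_prop), integral_const_mul, integral_const_mul,
            integral_const, smul_eq_mul, hcross₀, mul_zero, add_zero]
      _ ≤ 4 * B ^ 4 * n ^ 2 * μ.real Set.univ + 8 * B ^ 2 * (n * (μ.real Set.univ * B ^ 2)) +
          μ.real Set.univ * (3 * B ^ 4) := by
          gcongr
          exact integral_sq_le_of_abs_sub_le hf hf₀ hB n
      _ ≤ 4 * B ^ 4 * (n + 1 : ℕ) ^ 2 * μ.real Set.univ := by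
          have : 0 ≤ B ^ 4 * μ.real Set.univ := by positivity
          push_cast
          linarith

lemma integral_sub_condExp_sq_le {m : MeasurableSpace Ω} (hm : m ≤ mΩ) {g : Ω → ℝ}
    (hg : MemLp g 2 μ) : ∫ ω, (g ω - (μ[g | m]) ω) ^ 2 ∂μ ≤ ∫ ω, g ω ^ 2 ∂μ :=
  calc ∫ ω, (g ω - (μ[g | m]) ω) ^ 2 ∂μ = ∫ ω, (condVar m g μ) ω ∂μ := (integral_condExp hm).symm
    _ ≤ ∫ ω, (μ[g ^ 2 | m]) ω ∂μ :=
        integral_mono_ae integrable_condVar integrable_condExp (condVar_ae_le_condExp_sq hm hg)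
    _ = ∫ ω, g ω ^ 2 ∂μ := integral_condExp hm

lemma integral_sq_martingalePart_le (hf : StronglyAdapted ℱ f) (hL2 : ∀ n, MemLp (f n) 2 μ)
    (hf₀ : f 0 = 0) {v : ℝ} (hv : ∀ n, ∫ ω, (f (n + 1) ω - f n ω) ^ 2 ∂μ ≤ v) (n : ℕ) :
    ∫ ω, martingalePart f ℱ μ n ω ^ 2 ∂μ ≤ n * v := by
  refine integral_sq_le_of_integral_sub_sq_le
    (martingale_martingalePart hf fun k ↦ (hL2 k).integrable one_le_two)
    (memLp_martingalePart one_le_two hL2) (martingalePart_zero.trans hf₀) (fun k ↦ ?_) n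
  simp_rw [← Pi.sub_apply, martingalePart_add_one_sub]
  exact (integral_sub_condExp_sq_le (ℱ.le k) ((hL2 (k + 1)).sub (hL2 k))).trans (hv k)

lemma integral_martingalePart_pow_four_le (hf : StronglyAdapted ℱ f) (hf₀ : f 0 = 0)
    (hB : ∀ᵐ ω ∂μ, ∀ n, |f (n + 1) ω - f n ω| ≤ B) (n : ℕ) :
    ∫ ω, martingalePart f ℱ μ n ω ^ 4 ∂μ ≤ 64 * B ^ 4 * n ^ 2 * μ.real Set.univ := by
  have hmeas (k : ℕ) : AEStronglyMeasurable (f k) μ := ((hf k).mono (ℱ.le k)).aestronglyMeasurable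
  have hint (k : ℕ) : Integrable (f k) μ :=
    (memLp_of_abs_sub_le hmeas hf₀ hB 1 k).integrable le_rfl
  have hdiff : ∀ᵐ ω ∂μ, ∀ n,
      |martingalePart f ℱ μ (n + 1) ω - martingalePart f ℱ μ n ω| ≤ 2 * B := by
    simpa only [Real.norm_eq_abs] using martingalePart_bdd_difference (f := f) ℱ hB
  calc ∫ ω, martingalePart f ℱ μ n ω ^ 4 ∂μ ≤ 4 * (2 * B) ^ 4 * n ^ 2 * μ.real Set.univ :=
        integral_pow_four_le_of_abs_sub_le (martingale_martingalePart hf hint)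
          (martingalePart_zero.trans hf₀) hdiff n
    _ = 64 * B ^ 4 * n ^ 2 * μ.real Set.univ := by ring

/-! ### Martingales with uniformly square-integrable increments -/

lemma exists_ae_eq_add_integral_pow_four_le_integral_sq_le (hf : Martingale f ℱ μ)
    (hf₀ : f 0 = 0) (hincr : UniformIntegrable (fun n ↦ f (n + 1) - f n) 2 μ) {δ : ℝ}
    (hδ : 0 < δ) :
    ∃ C, ∃ Y Z : ℕ → Ω → ℝ, (∀ n, f n =ᵐ[μ] Y n + Z n) ∧
      (∀ n, Integrable (fun ω ↦ Y n ω ^ 4) μ ∧ ∫ ω, Y n ω ^ 4 ∂μ ≤ C * n ^ 2) ∧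
      ∀ n, Integrable (fun ω ↦ Z n ω ^ 2) μ ∧ ∫ ω, Z n ω ^ 2 ∂μ ≤ n * δ := by
  obtain ⟨A, hA⟩ := exists_integral_sub_truncation_sq_le hincr hδ
  let T := truncatedIncrementSum f A
  have hT : StronglyAdapted ℱ T := stronglyAdapted_truncatedIncrementSum hf.stronglyAdapted A
  have hT₀ : T 0 = 0 := truncatedIncrementSum_zero f A
  have hTB : ∀ᵐ ω ∂μ, ∀ n, |T (n + 1) ω - T n ω| ≤ |A| :=
    ae_of_all _ (abs_truncatedIncrementSum_sub_le f A)
  have hTL (p : ℝ≥0∞) (n : ℕ) : MemLp (T n) p μ :=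
    memLp_of_abs_sub_le (fun n ↦ ((hT n).mono (ℱ.le n)).aestronglyMeasurable) hT₀ hTB p n
  have hRL (n : ℕ) : MemLp ((f - T) n) 2 μ :=
    (memLp_of_memLp_sub hf₀ hincr.memLp n).sub (hTL 2 n)
  refine ⟨64 * |A| ^ 4 * μ.real Set.univ, martingalePart T ℱ μ, martingalePart (f - T) ℱ μ,
    fun n ↦ ?_,
    fun n ↦ ⟨?_, (integral_martingalePart_pow_four_le hT hT₀ hTB n).trans_eq (by ring)⟩,
    fun n ↦ ⟨(memLp_martingalePart one_le_two hRL n).integrable_sq, ?_⟩⟩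
  · calc f n =ᵐ[μ] martingalePart f ℱ μ n := (hf.martingalePart_eq n).symm
      _ = martingalePart (T + (f - T)) ℱ μ n := by rw [add_sub_cancel]
      _ =ᵐ[μ] martingalePart T ℱ μ n + martingalePart (f - T) ℱ μ n :=
        martingalePart_add (fun k ↦ (hTL 1 k).integrable le_rfl)
          (fun k ↦ (hRL k).integrable one_le_two) n
  · have := (memLp_martingalePart (ℱ := ℱ) (by norm_num) (hTL 4) n).integrable_norm_pow
      four_ne_zero
    simpa only [Real.norm_eq_abs, Even.pow_abs (by decide : Even 4)] using this
  · refine integral_sq_martingalePart_le (hf.stronglyAdapted.sub hT) hRL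
      (by rw [Pi.sub_apply, hf₀, hT₀, sub_zero]) (fun k ↦ ?_) n
    convert hA k using 3 with ω
    simp only [← truncatedIncrementSum_add_one_sub, Pi.sub_apply, T]
    ring

theorem exists_integral_sq_posPart_sub_le (hf : Martingale f ℱ μ) (hf₀ : f 0 = 0)
    (hincr : UniformIntegrable (fun n ↦ f (n + 1) - f n) 2 μ) {δ : ℝ} (hδ : 0 < δ) :
    ∃ L > 0, ∀ n : ℕ, 1 ≤ n → ∫ ω, (f n ω - L * √n)⁺ ^ 2 ∂μ ≤ δ * n := by
  obtain ⟨C, Y, Z, hf_eq, hY, hZ⟩ :=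
    exists_ae_eq_add_integral_pow_four_le_integral_sq_le hf hf₀ hincr (δ := δ / 4) (by positivity)
  obtain ⟨L, hL, hCL⟩ : ∃ L > 0, C / (8 * L ^ 2) ≤ δ / 2 := by
    refine ⟨1 + |C| / δ, by positivity, ?_⟩
    rw [div_le_iff₀ (by positivity)]
    have : |C| / δ * δ = |C| := by field_simp
    nlinarith [le_abs_self C, sq_nonneg (|C| / δ), abs_nonneg C]
  refine ⟨L, hL, fun n hn ↦ ?_⟩
  have hn : (0 : ℝ) < n := by exact_mod_cast hn
  calc ∫ ω, (f n ω - L * √n)⁺ ^ 2 ∂μ = ∫ ω, (Y n ω + Z n ω - L * √n)⁺ ^ 2 ∂μ := by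
        refine integral_congr_ae ?_
        filter_upwards [hf_eq n] with ω hω
        rw [hω, Pi.add_apply]
    _ ≤ (∫ ω, Y n ω ^ 4 ∂μ) / (8 * (L * √n) ^ 2) + 2 * ∫ ω, Z n ω ^ 2 ∂μ :=
        integral_sq_posPart_add_sub_le (hY n).1 (hZ n).1 (by positivity)
    _ ≤ C * n ^ 2 / (8 * (L * √n) ^ 2) + 2 * (n * (δ / 4)) := by
        gcongr
        exacts [(hY n).2, (hZ n).2]
    _ = C / (8 * L ^ 2) * n + δ / 2 * n := by
        rw [mul_pow, Real.sq_sqrt hn.le]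
        field_simp
        ring
    _ ≤ δ / 2 * n + δ / 2 * n := by gcongr
    _ = δ * n := by ring

theorem exists_setIntegral_sq_partialSups_div_sqrt_le (hf : Martingale f ℱ μ)
    (hf₀ : f 0 = 0) (hincr : UniformIntegrable (fun n ↦ f (n + 1) - f n) 2 μ) {ε : ℝ}
    (hε : 0 < ε) :
    ∃ K > 0, ∀ n : ℕ, 1 ≤ n → ∫ ω in {ω | (partialSups f n ω / √n) ^ 2 > K},
      (partialSups f n ω / √n) ^ 2 ∂μ ≤ ε := by
  obtain ⟨L, hL, hle⟩ := exists_integral_sq_posPart_sub_le hf hf₀ hincr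
    (δ := ε / 16) (by positivity)
  refine ⟨(2 * L) ^ 2, by positivity, fun n hn ↦ ?_⟩
  have hn' : (0 : ℝ) < n := by exact_mod_cast hn
  have hM₀ (ω : Ω) : 0 ≤ partialSups f n ω := by
    simpa [hf₀] using le_partialSups_of_le f n.zero_le ω
  have hset : {ω | (partialSups f n ω / √n) ^ 2 > (2 * L) ^ 2} =
      {ω | 2 * (L * √n) < partialSups f n ω} := by
    ext ω
    have := hM₀ ω
    rw [Set.mem_ofPred_eq, gt_iff_lt, pow_lt_pow_iff_left₀ (by positivity) (by positivity)
      two_ne_zero, lt_div_iff₀ (by positivity), mul_assoc, Set.mem_ofPred_eq]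
  calc ∫ ω in {ω | (partialSups f n ω / √n) ^ 2 > (2 * L) ^ 2}, (partialSups f n ω / √n) ^ 2 ∂μ
      = (∫ ω in {ω | 2 * (L * √n) < partialSups f n ω}, partialSups f n ω ^ 2 ∂μ) / n := by
        simp_rw [hset, div_pow, Real.sq_sqrt hn'.le, integral_div]
    _ ≤ (16 * ∫ ω, (f n ω - L * √n)⁺ ^ 2 ∂μ) / n := by
        gcongr
        exact setIntegral_sq_partialSups_le hf.submartingale (memLp_of_memLp_sub hf₀ hincr.memLp)
          (by positivity) n
    _ ≤ (16 * (ε / 16 * n)) / n := by gcongr; exact hle n hn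
    _ = ε := by field_simp

/-! ### Sums of independent centred random variables -/

/-- The filtration whose `n`-th σ-algebra is generated by `X 0, …, X (n - 1)`. The index is shifted
with respect to `Filtration.natural`, so that `X n` is independent of the `n`-th σ-algebra. -/
def precedingFiltration (X : ℕ → Ω → ℝ) (hX : ∀ n, Measurable (X n)) : Filtration ℕ mΩ where
  seq n := ⨆ i ∈ Set.Iio n, MeasurableSpace.comap (X i) inferInstance
  mono' _ _ hmn := biSup_mono fun _ hi ↦ lt_of_lt_of_le hi hmn
  le' _ := iSup₂_le fun i _ ↦ (hX i).comap_le

lemma martingale_sum_range {X : ℕ → Ω → ℝ} (hX : ∀ n, Measurable (X n))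
    (hint : ∀ n, Integrable (X n) μ) (hindep : iIndepFun X μ) (hmean : ∀ n, ∫ ω, X n ω ∂μ = 0) :
    Martingale (fun n ω ↦ ∑ i ∈ Finset.range n, X i ω) (precedingFiltration X hX) μ := by
  refine martingale_of_condExp_sub_eq_zero_nat (fun n ↦ ?_) (fun n ↦ by fun_prop) fun n ↦ ?_
  · refine Finset.stronglyMeasurable_fun_sum _ fun i hi ↦ Measurable.stronglyMeasurable ?_
    exact (comap_measurable (X i)).mono (le_biSup (fun i ↦ MeasurableSpace.comap (X i) _)
      (Finset.mem_range.mp hi)) le_rfl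
  · have hpast :
        Indep (MeasurableSpace.comap (X n) inferInstance) (precedingFiltration X hX n) μ := by
      simpa [precedingFiltration] using! indep_iSup_of_disjoint (S := {n}) (T := Set.Iio n)
        (fun i ↦ (hX i).comap_le) hindep.iIndep (by simp)
    have hincr : (fun ω ↦ ∑ i ∈ Finset.range (n + 1), X i ω) -
        (fun ω ↦ ∑ i ∈ Finset.range n, X i ω) = X n :=
      funext fun ω ↦ Finset.sum_range_succ_sub_sum (X · ω)
    rw [hincr]
    refine (condExp_indep_eq (hX n).comap_le ((precedingFiltration X hX).le n)
      (comap_measurable (X n)).stronglyMeasurable hpast).trans ?_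
    rw [hmean n]
    rfl

end

theorem stmt19_general {Ω : Type*} {mΩ : MeasurableSpace Ω} {μ : Measure Ω} [IsFiniteMeasure μ]
    {ℱ : Filtration ℕ mΩ} {X : ℕ → Ω → ℝ}
    (hS : Martingale (fun n ω ↦ ∑ i ∈ Finset.range n, X i ω) ℱ μ) (hX : UniformIntegrable X 2 μ)
    {Sbar : ℕ → Ω → ℝ}
    (hSbar : ∀ n, ∀ hn : 1 ≤ n, ∀ ω, Sbar n ω = (Finset.Icc 1 n).sup' (Finset.nonempty_Icc.mpr hn)
      (fun k ↦ ∑ i ∈ Finset.range k, X i ω)) :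
    ∀ ε > (0 : ℝ), ∃ K > (0 : ℝ), ∀ n, 1 ≤ n →
      ∫ ω in {ω | (max (Sbar n ω) 0 / √n) ^ 2 > K}, (max (Sbar n ω) 0 / √n) ^ 2 ∂μ ≤ ε := by
  intro ε hε
  let S : ℕ → Ω → ℝ := fun n ω ↦ ∑ i ∈ Finset.range n, X i ω
  have hS₀ : S 0 = 0 := funext fun ω ↦ Finset.sum_range_zero _
  have hincr : (fun n ↦ S (n + 1) - S n) = X :=
    funext₂ fun n ω ↦ Finset.sum_range_succ_sub_sum (X · ω)
  have hmax (n : ℕ) (hn : 1 ≤ n) (ω : Ω) : max (Sbar n ω) 0 = partialSups S n ω := by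
    rw [hSbar n hn ω, Pi.partialSups_apply, ← max_sup'_Icc_eq_partialSups _ hn, hS₀,
      Pi.zero_apply]
  obtain ⟨K, hK, hle⟩ :=
    exists_setIntegral_sq_partialSups_div_sqrt_le (f := S) hS hS₀ (hincr.symm ▸ hX) hε
  refine ⟨K, hK, fun n hn ↦ ?_⟩
  simpa only [hmax n hn] using hle n hn

/-- Uniform integrability of the family `{(S̄ₙ⁺/√n)² : n ≥ 1}`: for every `ε > 0`
there is `K > 0` with `E[(S̄ₙ⁺/√n)² 1_{(S̄ₙ⁺/√n)² > K}] ≤ ε` for all `n ≥ 1`. -/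
theorem stmt19 {Ω : Type*} [MeasureSpace Ω] [IsProbabilityMeasure (ℙ : Measure Ω)]
    (X : ℕ → Ω → ℝ) (hmeas : ∀ i, Measurable (X i))
    (hindep : iIndepFun X ℙ)
    (hident : ∀ i, Measure.map (X i) ℙ = Measure.map (X 0) ℙ)
    (hL2 : MemLp (X 0) 2 ℙ)
    (hmean : ∫ ω, X 0 ω ∂ℙ = 0)
    (hvar : ∫ ω, (X 0 ω) ^ 2 ∂ℙ = 1)
    (Sbar : ℕ → Ω → ℝ)
    (hSbar : ∀ n, ∀ hn : 1 ≤ n, ∀ ω, Sbar n ω =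
      (Finset.Icc 1 n).sup' (Finset.nonempty_Icc.mpr hn)
        (fun k => ∑ i ∈ Finset.range k, X i ω)) :
    ∀ ε > (0 : ℝ), ∃ K > (0 : ℝ), ∀ n, 1 ≤ n →
      ∫ ω in {ω | (max (Sbar n ω) 0 / Real.sqrt n) ^ 2 > K},
        (max (Sbar n ω) 0 / Real.sqrt n) ^ 2 ∂ℙ ≤ ε := by
  have hdistrib (i : ℕ) : IdentDistrib (X i) (X 0) ℙ ℙ :=
    ⟨(hmeas i).aemeasurable, (hmeas 0).aemeasurable, hident i⟩
  exact stmt19_general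
    (martingale_sum_range hmeas (fun i ↦ ((hdistrib i).memLp_iff.mpr hL2).integrable one_le_two)
      hindep fun i ↦ (hdistrib i).integral_eq.trans hmean)
    (MemLp.uniformIntegrable_of_identDistrib one_le_two ENNReal.ofNat_ne_top hL2 hdistrib) hSbar
end
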